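/- arXiv:2509.20255 — 2 statements merged into one kernel-verified Lean document; each statement's English description precedes it below -/
import Mathlib

section
/- Every 9×13 sign matrix has at most 79 3-neighborly plain travels. (Equivalently, every rank 9 Lawrence oriented matroid on 13 elements has at most c_9(13,3) = 158 3-neighborly reorientations.) -/
/-- An `r × n` sign matrix: entries in `{+1, -1}` (1-indexed: `1 ≤ i ≤ r`, `1 ≤ j ≤ n`). -/
def IsSignMatrix (r n : ℕ) (A : ℕ → ℕ → ℤ) : Prop :=
  ∀ i j, 1 ≤ i → i ≤ r → 1 ≤ j → j ≤ n → A i j = 1 ∨ A i j = -1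

/-- `A_S`: the matrix obtained from `A` by negating every entry of each column in `S`. -/
def reorient (A : ℕ → ℕ → ℤ) (S : Finset ℕ) : ℕ → ℕ → ℤ :=
  fun i j => if j ∈ S then -A i j else A i j

/-- The first column `c'` with `c < c' ≤ n` where row `i` changes sign relative to
entry `a_{i,c}`, if such a column exists. -/
def rowChange (A : ℕ → ℕ → ℤ) (n i c : ℕ) : Option ℕ :=
  (List.range (n + 1)).find? fun c' => decide (c < c' ∧ A i c' ≠ A i c)

/-- `ttEntry A n i` is the column at which the top travel of `A` enters row `i`
(rows and columns 1-indexed): the travel enters row 1 at column 1, and, having entered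
row `i` at column `c`, it enters row `i+1` at the first sign change of row `i` after
column `c` (if any).  The value `some` at the "virtual" row `r+1` means the top travel
had a sign change in the bottom row `r`, i.e. the top travel is positive. -/
def ttEntry (A : ℕ → ℕ → ℤ) (n : ℕ) : ℕ → Option ℕ
  | 0 => none
  | 1 => some 1
  | i + 2 => (ttEntry A n (i + 1)).bind (rowChange A n (i + 1))

/-- The top travel of the `r × n` sign matrix `A` is positive: it contains two
horizontally consecutive entries of row `r` with opposite signs. -/
def ttPositive (A : ℕ → ℕ → ℤ) (r n : ℕ) : Prop :=
  (ttEntry A n (r + 1)).isSome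

/-- `A` is `k`-neighborly: for every set `S` of at most `k` columns, the top travel
of `A_S` is not positive. -/
def IsNeighborly (A : ℕ → ℕ → ℤ) (r n k : ℕ) : Prop :=
  ∀ S : Finset ℕ, S ⊆ Finset.Icc 1 n → S.card ≤ k → ¬ ttPositive (reorient A S) r n

/-- A plain travel of an `r × n` sign matrix, identified with the set `D` of columns of
its downward (vertical) moves: the columns `2 ≤ j₁ < ⋯ < j_{s-1} ≤ n` with `s ≤ r`. -/
def IsPlainTravel (r n : ℕ) (D : Finset ℕ) : Prop :=
  D ⊆ Finset.Icc 2 n ∧ D.card ≤ r - 1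

/-- The top travel of `A` follows exactly the plain travel with downward-move columns `D`:
it makes its downward moves precisely at the columns of `D` (entering rows `2, …, |D|+1`
there) and then ends at column `n` in row `|D|+1` without a further sign change. -/
def ttFollows (A : ℕ → ℕ → ℤ) (n : ℕ) (D : Finset ℕ) : Prop :=
  ttEntry A n (D.card + 2) = none ∧
  ∀ c, c ∈ D ↔ ∃ i, 2 ≤ i ∧ i ≤ D.card + 1 ∧ ttEntry A n i = some c

/-- The plain travel `D` of `A` is `k`-neighborly: there is a set `R` of columns such that
the top travel of `A_R` follows exactly the path `D` and `A_R` is a `k`-neighborly matrix. -/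
def IsNeighborlyTravel (A : ℕ → ℕ → ℤ) (r n k : ℕ) (D : Finset ℕ) : Prop :=
  ∃ R : Finset ℕ, R ⊆ Finset.Icc 1 n ∧ ttFollows (reorient A R) n D ∧
    IsNeighborly (reorient A R) r n k

def codes1 : List Nat :=
  [9586952, 9586945, 76695816, 76695809, 43141384, 43141377, 110250248, 110250241]

def codes2 : List Nat :=
  [9586960, 9586697, 9570569, 8538377, 9586953, 9586946, 76695824, 76695561, 76679433,
    68307209, 76695817, 76695810, 43141392, 43141129, 43010313, 42092809, 43141385,
    43141378, 110250256, 110249993, 110119177, 101861641, 110250249, 110250242]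

def codes3 : List Nat :=
  [9586968, 9586705, 9569041, 8536849, 9585425, 9570577, 8440081, 9488657, 8538385,
    3295505, 9586961, 9586698, 9570570, 8538378, 9586954, 68305681, 76694289, 68307217,
    76695825, 68307210, 76695818, 42092817, 43141393, 42092810, 43141386, 110119185,
    101861649, 110250257, 110119178, 101861642, 110250250, 9586948, 76695840, 76695812,
    76695588, 76679460, 43141408, 43141380, 43141156, 43010340, 110250272, 110250244,
    110250020]

def codes4 : List Nat :=
  [9585433, 9488665, 8538393, 3295513, 9586969, 9488466, 8538194, 3295314, 9586770,
    9585426, 8526098, 3283218, 9574674, 9488658, 8538386, 8800530, 3295506, 9586962,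
    9586956, 76694297, 76695833, 76695634, 76694290, 76683538, 75811090, 68208914,
    75909394, 68307218, 70404370, 76695826, 76695820, 43139865, 43141401, 43141202,
    43139858, 42080530, 36837650, 43043090, 42092818, 42354962, 36849938, 43141394,
    43141388, 110248729, 110250265, 110250066, 110236434, 110237970, 109365522, 101763346,
    110151954, 109463826, 101861650, 103958802, 110250258, 110250252, 9586976, 9586948, 8538380,
    9586724, 9570596, 8440100, 76695840, 68307233, 76695812, 68307212, 76695588, 68307044,
    68305700, 76679460, 68294948, 43141408, 42092833, 43141380, 42092812, 43141156,
    42092644, 42091300, 43010340, 41994532, 110250272, 101861665, 110250244, 101861644,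
    110250020, 101861476, 101849380, 110119204]

def codes5 : List Nat :=
  [9586977, 9585754, 9586778, 9573658, 8799514, 3294490, 9585946, 9574682, 8735002,
    3229978, 9521434, 8538394, 8800538, 3295514, 5392666, 9586970, 9586772, 9574676,
    8800532, 3295508, 9586964, 75908378, 70403354, 76694810, 75909402, 70404378, 76695834,
    75909396, 70404372, 76695828, 42354970, 36849946, 43141402, 42354964, 36849940,
    43141396, 110151962, 109463834, 103958810, 110250266, 110151956, 109463828, 103958804,
    110250260, 3295521, 9586956, 8538388, 3295332, 8526116, 3283236, 9488676, 8472868,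
    76695841, 76695820, 76695652, 68306212, 76683556, 68299044, 75811108, 68208932,
    43141409, 43141388, 43141220, 42091812, 42080548, 36837668, 43043108, 42027300,
    110250273, 110250252, 110250084, 101861540, 110237988, 101853476, 109365540, 101763364]

def codes6 : List Nat :=
  [9585954, 9521442, 8800546, 5392674, 9586978, 9586964, 9585820, 9521308, 8800412,
    5392540, 9586844, 9585948, 8792348, 5384476, 9578780, 9521436, 8800540, 4868380,
    9062684, 3295516, 5392668, 9586972, 76694818, 76695842, 76695828, 76694684, 76695708,
    76694812, 76687644, 76106012, 70338844, 75909404, 71977244, 76171548, 70404380,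
    72501532, 76695836, 43140386, 43141410, 43141396, 43140252, 43141276, 43140380,
    42346780, 38938908, 43075868, 42354972, 38422812, 42617116, 36849948, 38947100,
    43141404, 110249250, 110250274, 110250260, 110249116, 110250140, 110241052, 110242076,
    109660444, 103893276, 110184732, 109463836, 105531676, 109725980, 103958812, 106055964,
    110250268, 9586977, 9586956, 8800532, 9586788, 3295396, 9574692, 8735012, 3229988,
    8505636, 6441252, 4606244, 2771236, 76695841, 70404386, 76695820, 70404372, 76695652,
    75909284, 70404260, 68307172, 70403364, 76683556, 70396196, 68303140, 75843876,
    68241700, 71715108, 69880100, 43141409, 42354978, 43141388, 42354964, 43141220,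
    42354852, 36849828, 42092772, 42353956, 42084644, 36841764, 43043108, 42289444,
    42060068, 38160676, 36325668, 110250273, 103958818, 110250252, 103958804, 110250084,
    109463716, 103958692, 109455652, 103950628, 101857572, 110151972, 105269540, 103434532,
    101599524]

def codes7 : List Nat :=
  [9586978, 5392675, 7489827, 9586979, 9586844, 9578780, 9062684, 5392668, 9586972,
    9586340, 9586852, 9578276, 9062180, 5392164, 9586468, 9578788, 9029924, 5359908,
    9554212, 8800548, 6965540, 9062692, 76171555, 72501539, 76695843, 76171548, 72501532,
    76695836, 76171044, 72501028, 76695332, 42617123, 38947107, 43141411, 42617116,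
    38947100, 43141404, 110184739, 109725987, 106055971, 110250275, 110184732, 109725980,
    106055964, 110250268, 5392674, 9586964, 8800540, 5392548, 3295460, 8792356, 5384484,
    9521444, 8767780, 3262756, 8538404, 6703396, 4868388, 3033380, 76695842, 70404387,
    76695828, 70404380, 76695716, 75909348, 76687652, 76106020, 70338852, 75876644,
    73812260, 71977252, 70142244, 68307236, 43141410, 42354979, 43141396, 42354972,
    43141284, 36849892, 42346788, 38938916, 36845860, 43075876, 42092836, 40257828,
    38422820, 36587812, 110250274, 103958819, 110250260, 103958812, 110250148, 109463780,
    110242084, 109459748, 109660452, 103893284, 107366692, 105531684, 103696676, 101861668]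

def codes8 : List Nat :=
  [7489827, 9586979, 9586972, 7489764, 9586916, 9586468, 7485732, 9582884, 9554212,
    9062692, 7227684, 9324836, 5392676, 7489828, 9586980, 76695843, 76695836, 76695780,
    76695332, 76691748, 76400932, 76171556, 74336548, 76433700, 72501540, 74598692,
    76695844, 43141411, 43141404, 43141348, 43140900, 41040164, 43108644, 42617124,
    40782116, 42879268, 38947108, 41044260, 43141412, 110250275, 110250268, 110250212,
    110246180, 109955364, 110217508, 109725988, 107890980, 109988132, 106055972, 108153124,
    110250276, 9586978, 5392675, 9586964, 9062684, 5392668, 9586852, 5392612, 9578788,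
    5388580, 9029924, 5359908, 8800548, 6965540, 5130532, 3295524, 76695842, 76171555,
    72501539, 76695828, 76171548, 72501532, 76695716, 76171492, 72501476, 72501028,
    76687652, 76167460, 72497444, 76138788, 75909412, 74074404, 72239396, 70404388,
    43141410, 42617123, 38947107, 43141396, 42617116, 38947100, 43141284, 42617060,
    38947044, 42616612, 38943012, 43075876, 42584356, 38914340, 42354980, 40519972,
    38684964, 36849956, 110250274, 109725987, 106055971, 110250260, 109725980, 106055964,
    110250148, 109725924, 106055908, 109721892, 106051876, 110184740, 109693220, 109463844,
    107628836, 105793828, 103958820]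

def codes9 : List Nat :=
  [9586979, 9586916, 9582884, 9324836, 7489828, 9586980, 76433700, 74598692, 76695844,
    42879268, 41044260, 43141412, 110217508, 109988132, 108153124, 110250276, 7489827,
    9586972, 7489764, 7485732, 9554212, 9062692, 7227684, 5392676, 76695843, 76695836,
    76695780, 76691748, 76400932, 76171556, 74336548, 72501540, 43141411, 43141404,
    43141348, 41040164, 43108644, 42617124, 40782116, 38947108, 110250275, 110250268,
    110250212, 110246180, 109955364, 109725988, 107890980, 106055972]

def codes10 : List Nat :=
  [9586980, 76695844, 43141412, 110250276, 9586972, 9324836, 7489828, 76691748, 76433700,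
    74598692, 43108644, 42879268, 41044260, 110250212, 109988132, 108153124]

def rows1 : List Nat :=
  [5363704299354131880195203815948093700, 6703357533215399550312463380143670784,
    18713323417085871200980153909996557326, 22716645380861617829599330780297564684,
    25323218176990573481172857631597071635, 23988777522398657938540932584290324759,
    9309930329344355201885990231443177735, 7975489674752439659254065184136430859]

def rows2 : List Nat :=
  [5394858557737299046589894882566673166, 18708110844651889956861670263508635396,
    18708110844651889956861670263542386951, 18708110844651889956861670263542518025,
    18713323423921242084347004780431413770, 41383237422789200371520364810342507008,
    51970492252414987521940354044218776615, 51986069383769976869494422904771123495,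
    51986069383769976869495267342586157351, 30728501888303860568315650475002567445,
    32057729963626423983824223348882545430, 50729514376668316098650095629801761318,
    56025737986000268305444414357242521130, 56025737985988178863501414263895500330,
    33433709633082369796957958148475070236, 35998723211471712236454583175825135390,
    36003935790742273308206276395598223390, 53356856676805556723366093881164244265,
    45251557608611843233105859850134487330, 45199633847744869814177178951570557730,
    22633587573168488964747042193092644371, 22643972325341883648532778372838985235,
    23978392776751144405933937857320455700, 42535944914647736070155135391639871265]

def rows3 : List Nat :=
  [354314928399646146021016165924291602, 12317367129076831629104041535546934281,
    6995262769540981044889034119146455813, 9652603228581403023003715412196475655,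
    10743026133644364033780471569639281928, 17411010506374594259978522961299446029,
    14985173391585843565150818214911559179, 16070403999839840466307656432281720588,
    21408125973848215736559700022706182928, 20084110715479492046886160928911334415,
    22742566786896456345119604456819727377, 24280419727442254843728290244556833792,
    24275227430583715293805053001955361537, 24275166583353695412974165431511302915,
    24082240303167332388840292755148379140, 101255657094080739600032957520043650380,
    44098850106821830384740327959837093153, 105258996250676032630743586741873356879,
    49441805101273772009930864902847935013, 101307762620456673530468737794357341260,
    56114008374545257345039411025358629920, 60211600997422289832519575206939151405,
    59987520936123346818962679247240241453, 58861522605022317852595029217824164407,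
    58653080281527804443965437649020725815, 89084667992057446988517539203054372163,
    89095048227916093349414687476853049155, 27955752864745421862834493753476319253,
    83746966539072826812603400693003194945, 83757346456780883077157818310009426497,
    26605735081893414294885946780028899870, 80113170665898665333176606720100418876,
    104133102437367992752106907820331259726, 100129780474211225587502248921123214411,
    104133102437367992752106907820331259726, 104133102437367992752106907820331259726,
    112046283595339590746582359328353962836, 116049605559112919486886402269977726551,
    112046283595339590746582359328353962836, 116049605559112919486886402269977726551,
    92029673787643592067956101169746885701, 82704166333760275292824004404596193600,
    92029673787643592067956101169746885701]

def rows4 : List Nat :=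
  [1620021359560519098679283356087105552, 4278517915908454040609788666598995985,
    6932752382507779002714614638792881939, 5431225396016051470732244813555571730,
    8089681467433015768965688341463964692, 22887993810636563161426222809379715075,
    25541944799794031411916720155856680709, 24071855548192813839468526872769598980,
    26730311619609778137701970400677991942, 21558745532478311967292748469060646914,
    25552329393511119956640838527053150473, 24071855548192813839468526872820193544,
    26730311619609778137701970400728586506, 22887993810636563161426222809379977223,
    25552227981460683846649487333421431053, 26730311619609778137701970400728848654,
    24077088409871774340991049681582561804, 26735544481288738639224493209491020303,
    60106945600119378179945447687477803008, 88093852687284293169543718596398696002,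
    87917311900955563009562140896219244610, 87938081409635208627759263683021251650,
    82776859579146143165383438139150714430, 87938081409635208627760389600107963458,
    44083272981665098291092748768187917854, 89271855290188146393971504884419077443,
    46741729053082062589327318213183022624, 89271855130184396316337230081781867843,
    44088505843344058792616397494036735774, 46746961914761023090850122501216806688,
    82776859588121345398829885393337206334, 93390076312689159395993389787586642502,
    93369306807723390564117757286293061190, 93369306807706465345397557155607232070,
    48195634854059779286159811490806776360, 49530802813027390057495860556130239273,
    50667205861739577050738326968776401194, 48195634854064615063225246302343807528,
    49530762248159825795157398291919356713, 51996434016295138776095192436229939499,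
    50677610737873508708737242522217816874, 52006838892425443601295031881018581803,
    90731579756280777241753771042555642437, 74520981618024322425946033259311268152,
    74520981618024322425946033259328045624, 74448288352810559639445880001338544184,
    74453480718374606086944153808498331960, 74474250222721395454515626167991013688,
    33272745975353445003016701668713304604, 75813217272563852457442568516824404793,
    33283150851482540883950182410617689116, 34622743634250960318879604684122493469,
    75833983290252521177740496614259888953, 33303920355829330251521654770110370844,
    34638340886466753541705953515900048413, 69120910487232853727028836750887038261,
    66768764039816828748352830431852378930, 64094710717117376201211035910809925680,
    65423918430493897329745233084777773105, 66768764039816828748352830431852378930,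
    66768764039816828748352830431852378930, 65423918430493897329745233084777773105,
    88119814503345119787401986965390904130, 88114622285405267186583213334224587330,
    85445761180645667240260192444348450880, 82776859588121354843576080675576366654,
    88119814503345119787401986965390904130, 88114622285405267186583213334224587330,
    82776859589978264902504151087925052990, 88119814503345119787401986965390904130,
    88114622285405267186583213334224587330, 96038188196793054570950508278329131080,
    93369306807765703542895981200180395590, 100036297421292048512923973695805473355,
    98707089707915527384389776521837625930, 96038188196793054570950508278329131080,
    93369306807765703542895981200180395590, 98707089707915527384389776521837625930,
    100036297421292048512923973695805473355, 98707089707915527384389776521837625930,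
    74687137733264763531901351744790605880, 74692329951204616132720125375956922680,
    78685246957763757473874817162266948155, 69349375589644674370165395860114189621,
    74687137733264763531901351744790605880, 74692329951204616132720125375956922680,
    74692329951204616132720125375956922680, 78685246957763757473874817162266948155]

def rows5 : List Nat :=
  [422078698459579589042622897760654085, 8423408396080755110842026420316296710,
    15079933127800131234566615874270812171, 9752636471403318526350317814924596743,
    12409753823939309261909951416896083465, 10769013071235523233449366063417989640,
    13427484572956106037620740736057743882, 20095692052219781726044617307268455951,
    17747516283775707153121096063328737805, 16096391096813360705645524806777248780,
    18754862439151582470147925598700182542, 25729374868554547760077723415918435091,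
    26761425157524572078312844428372353556, 21434148941065251947336270998322356240,
    24108202185471055879951341493150688018, 28095886252982421060909937154359173909,
    7078522300540536383429391526736318720, 7078522300540536383501449125085991169,
    7078522300540536383501449125081272579, 93170682848238938177037381171367057154,
    6770858429188716377838455717630318340, 55113091819525101036040428392741697065,
    134543637128578736155960030818105636965, 54789952469956681528224030826332502057,
    60128992800664252298755372179016924205, 143863886525294117382989262890468195180,
    60132907464408623153414567769343343917, 52439018212862858408344058154411192614,
    131874755759973773720877516188190913889, 52121071159844381245600110577575146790,
    74963586327411888407165488991816803640, 157062931517428933476359325598313097590,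
    74650791006506506874039546930284472632, 70955031501954763369611204897080042294,
    150401153482232595739548753891561973619, 70647469042727133412115757179329718070,
    114350486957615293302579860444236351318, 34603211283009288044888299073044875290,
    114360866322273637016390640261886773590, 34612379011305472778267927736443603482,
    107673132348759627949681695838178903379, 30584271626153023716407447503794030104,
    107683511238048996577906450095672919379, 30593479919269634123680785905120445720,
    104101948192352122342744793522496754502, 97497245813178881275798753602603407689,
    96136802870545370023682417637758685512, 104174641461602550035268280225394220878,
    100176532076785447393993879836724845899, 104174641461602550035268280225394220878,
    97497245813178881275798753602603407689, 105483079908626249626478598548882283343,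
    142863035672091011336223760542916639339, 132197915392261603011126222554979923041,
    142863035672091011336223760542916639339, 137520060714306107500630627114528699751,
    142863035672091011336223760542916639339, 145526765329086293098756262068231306093,
    146861165260402666920703241212102868078, 140188982429239900267327411157908223849,
    154706825326047619464240535724042051956, 162723874208640836682039276646868609914,
    154712037905316971591726432091372807284, 164063547963836553530500293891377163643,
    158725785266863353975563576051657959799, 165397947895152950871687086419620949628,
    162723874208640836682039276646868609914, 164063547963836553530500293891377163643,
    118682140251528248016445940602989267289, 108022172335699265863184495256553014611,
    118682140251528248016445940602989267289, 121335323134436167210570417000471152731,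
    118682140251528248016445940602989267289, 121371851754143252535581073625946410843,
    126683591801751458170747138122213969503, 124009497912987571521343657288138509149]

def rows6 : List Nat :=
  [12300738974874174918425460232725741828, 14959235531197930973587617614561362181,
    17592578952823795888948290262838230535, 16101558254489787737102696316961954310,
    18760014325906752035336139844870347272, 61482925268068979438851055331429073152,
    5654497583901577295554305195067916553, 6983745862035649602919431606710780171,
    9627473640620143253301363390364859405, 8110491457995883537318545416837143820,
    10768947529412847835551988944745536782, 5654497583901577295554305195067982090,
    9627473640620143253301363390264196113, 8110491457995883537318545416736741136,
    10768947529412847835551988944645134098, 6983745862035649602919431606711042319,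
    9627473640620143253301363390261967873, 8110491457995883537318545416737003284,
    10768947529412847835551988944645461762, 62603670135939520743504116966622303763,
    8115724319674844038841068225497798677, 10774180391091808337074511753406257155,
    109470865038704048099026646928198884178, 109190476730641371101187707430220474706,
    100155742350615301056672014525432158025, 109470865037156599438088914632707300178,
    109211246233131222075633901035056145746, 102824623646181583926541206281452870477,
    109211246233131222075635026952142857554, 45417713632230020482631329646475421471,
    101240121177158876005028200752072369738, 46991831362694464047804890974381561888,
    45417713632230020482632455563562133279, 48076169703646984780866180480547890977,
    101240121177158876005023697006416111178, 45422946493908980984149348877084993567,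
    48081402565325945282383073794070751265, 121387368174932127141411280256551834203,
    121361406293879660967642779665368304987, 116070375062149213268715093076221710937,
    121387368174938171862382780303225344603, 121361406293886914632808579721376517467,
    49607961152436535423979081995832087081, 50896681201577729158926730052350135338,
    52001646515411486006095372531394093611, 49607961152441371201044516807369118249,
    50896681201536625385911927481057299498, 52001646515416321783160807342931124779,
    53330874669968256288336971153831305772, 117138993741565089879729920148691886938,
    52012051391521239166148739575050937387, 53341279546073173671324903385951118380,
    86421907615253257529764671362168850753, 86421907615253257529764671362185628225,
    78425648440490511587094299065278344765, 86447869495686744239229011811450815553,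
    86453061871773441581121879901323985985, 86458254231147693384857965355650319681,
    86479023735494482752429437715143001409, 30655788427968683365537711186509432346,
    79842399233067485347652344000319915838, 30666193304097779246471191928413816858,
    29342886583234999588271939525623557913, 30676557932315472733109183546002114074,
    32010976799161483223742392827368834587, 79759319789573402620608377878558082878,
    30583116950502034575736391954866047002, 31917535817348045066369601236232767515,
    69432453531551368312241595063901044276, 62812254675909167143543480366857929010,
    68129085529404371492117055503332819251, 69468799609567180346572643755770528564,
    74801390292715292264444126199667050040, 69468799609567180346572643755770528564,
    68129268071101684689527414785794654515, 66799938663263914873511826742259695922,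
    77470190155348039723150067809935378490, 77470190155348039723150067809935378490,
    76135790224031665993797097004801214265, 74801390292715292264444126199667050040,
    109455288478039657702732799981210720850, 109491634002999693667756484396619816786,
    101505841025426095004358162619772722506, 101484970425937864472193816942260868938,
    109496826852907936323761888376774615122, 109496826852907936323761888376774615122,
    109491634874509481324664197964408971090, 110831328672573427853427179328225304915,
    102824623661346557191923057147155143501, 109496826852907936323761888376774615122,
    109491634874509481324664197964408971090, 110831328672573427853427179328225304915,
    113500128535206175312133120938493633365, 110815650369948577296902794995806854739,
    113500128535206175312133120938493633365, 112165728603889801582780150133359469140,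
    124014649944846276782754769769166555741, 121356193714663502390614902077386148443,
    117399765317272614494191904579496399450, 126704219310905844690658629568387764831,
    124019903088939671916859972547698838877, 121361406293938899147198871590590434651,
    132036911169031616899567890082388137315, 122721970692101564746452272047406207836,
    126704442417411484859033302883757150815, 125380426922593824166932287579465470814,
    132036911169031616899567890082388137315, 128033589283551941477638533843852939872,
    126704442417411484859033302883757150815, 129368111306398869440861948472119808865,
    130702511237715243170214919277253973090, 132036911169031616899567890082388137315,
    86645180105131828605133402599099281985, 86665948974105916421317833509698614081,
    80025021969968890643397692190066095166, 79988533994311592987632017658986966590,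
    86660756995707437810386321382662287937, 86660756995707437810386321382662287937,
    86665949689944744138088977517361836865, 86660756995707461422220143105771909697,
    86665949689944744138088977517361836865, 96006972789173481310584836953829882440,
    89329617942010726895280960119282742339, 93338172926540733851878895343561553990,
    94672572857857107581231866148695718215, 96006972789173481310584836953829882440]

def rows7 : List Nat :=
  [7000434544470317674140114982654068482, 12077487228792723284189454877984429577,
    14751540473198527216804525372812761355, 18739224540709892397763121034021247246,
    3028205595090353572516542737335206917, 3028205595090353572516542737284875272,
    3028205595090353572516542737281532928, 71861434739423932299598606535768411913,
    2741574582490266794165770831783857921, 7031588326247778585636966560249432581,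
    7036780623418225737978403943962397445, 11019272234374363690084050147529738760,
    4372097852559998090373393536309086723, 12051387746985012774442531712563089673,
    5405263515276701861805967923650760964, 10759657629753223843978929394838935560,
    8380551186658735325646896988699577862, 12061833506393399361448761377211945737,
    9403393102965751148893977568252203783, 16382955773148797596703149548332012300,
    13417079377740678234207432646825941002, 17404763445252043415166028308034426893,
    42786476634411167458834713276466606112, 127829809203136403382565980586280758112,
    42764409452228705897408284651906149408, 37775747667717551971986952796805359643,
    117180331905027825296550429868334720853, 37426646833552762937511748811871692571,
    39120613480847945096431286475359481373, 121173228695409587199352812089003288923,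
    38761087488454168212765824313848572189, 54973080209253809710701163353140517673,
    146366494956700392488330855333537324398, 54649758317755684646988175601251720489,
    52283348582999823651316475262302640168, 138380701346225098928846507628550429803,
    51980877008570644616734846554661723176, 98404759651683671381532533206891432010,
    22645107748864958704075384946365696273, 98378794126754709015908663453648225098,
    22617990246377759690859990107487798289, 90429351110295631374571657728873202247,
    19986529824526765559726545762062382608, 90387808694791064526062196487497974343,
    19943916561107231263052210367441666576, 80107978291998948170570620811590649654,
    72174108365962394434259619219857099834, 73477293668890257427891391313261511732,
    80180671561555238762194624569990206012, 82834016464828468328256433769620197694,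
    81515091614966772129941657968449442621, 80180671561555238762194624569990206012,
    77491020906175075715624954001595452474, 78830714546402847716008169978799738427,
    82813145468584096149686289442964983102, 86832044244327454136904388251880411969,
    85502816327461215786962375379888526144, 84168416396144842057609404574754361919,
    82834016464828468328256433769620197694, 126818391448485917333157045854923156319,
    128199786199161063004780345345060205152, 117534665600871574832561108032832564309,
    117524260724742478951626779576052901717, 126865345226730460208385763629886107999,
    129549762782130632524407571944908551777, 126865345226730460208385763629886107999,
    132177125681636052591886887379385151587, 130842603976940961596429148912829230946,
    133537487494314382227268526886894073444, 133537487494314382227268526886894073444,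
    132203087562998008497915556081759909219, 130868687631681634768562585276625744994,
    130863515617231499389151627343483466594, 144015723039032735143936010604247537004,
    145360588931397562085263559614375287661, 138735278430986544096998466699050180459,
    137353945003853322400955308609144313962, 144031360776844418303851699168833592172,
    146694988862706682370811646053876325486, 148055431726107204739005335044197737071,
    149389852415819918299437829775300780912, 157370493738112516484677207807394866294,
    150698331267655424708542124864155246449, 153372465958613530676029253325134652019,
    154701693875479769025971266197126537844, 156036093806796142755324237002260702069,
    157370493738112516484677207807394866294, 101303156391408470763028937027172448844,
    98660318171222490904978710101750266186, 90653654278171621478614905776127685959,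
    90658867015898507560448531208790751047, 101323986426075061973114318797633370700,
    97357071545688351055810896713227058761, 101324067555719535375994386263936219724,
    102674064818476261732369423034718502477, 109309901411934977023230605033810836562,
    110644260857343567398768026092865273171, 107991078610426143980496785586554879569,
    109325478541742517709849756391689043794, 110659878473058891439202727196823208019,
    110665050487509026818613685129965486419]

def rows8 : List Nat :=
  [4024091469992772777403597960673167107, 6682547541409737075637041488581560069,
    22727030141736993345094013238409959424, 4024091469992772777403597960673167107,
    6682547541409737075637041488581560069, 1464250067022076970398052194707380737,
    4024091469992772777403597960673167107, 6682547541409737075637041488581560069,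
    2798690721886004971088848234397965058, 5478299594876739498814694491153571588,
    4024091469992772777403597960673167107, 6682547541409737075637041488581560069,
    27945025289812604338723386438254331413, 4029324331671733278926120769435273219,
    6687780403088697577159564297343666181, 47915246528694691948900221888816745508,
    44078080605265284384138666103602685984, 47915246528694691948900221888816745508,
    45412521254595874480011275756376304162, 47915246528694691948900221888816745508,
    12035927769901370314601482354206248457, 13537069390597259445329407819766902538,
    12035927769901370314601482354206248457, 14694383841318334612834925882114641419,
    49249142257528972968455714036712607013, 12041160631580330816124005162968354569,
    14699616702997295114357448690876747531, 56004968479165471637704479627706769962,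
    53336087169982849497280924470777291049, 56004968479165471637704479627706769962,
    16137904885813979260789812395611268108, 18656207281673604379407065027246426382,
    16137904885813979260789812395611268108, 17473032996385135709743323699047507213,
    18656207281673604379407065027246426382, 19985435436224330327698495683162933519,
    62525905382842154533095820341269039663, 18666612157802700260340545769150810894,
    19995840312353426208631976425067318031, 34565647622183877840229661305413959962,
    31901958689086744096207617745416163609, 34565647622183877840229661305413959962,
    35900088267182820629730312666453049883, 9320315079965465447377509737279456007,
    9330719956094561328310990479183840519, 8085035284417347395891684308986828038,
    9320315079965465447377509737279456007, 10649543234516191395668940393195963144,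
    41226960429573512875868747907824223263, 9330719956094561328310990479183840519,
    10659948110645287276602421135100347656, 21392690899193096060597187408846461201,
    28070005497830332710192470096742850069, 22727030141736993345094013238411008021,
    22727030141736993345094013238411335696, 22727030141736993345094013238411008021,
    26745949278192094580188711371893186324, 28070005497830332710192470096742850069,
    26745949278192094580188711371893186324, 28070005497830332710192470096742850069,
    25395952016054357188479827128880536339, 28054367442801354909044151172121959189,
    30733633346012944789487453773868900119, 29404405429146706439545440901877014294,
    28070005497830332710192470096742850069, 28064833483380197330781512163600571669,
    42743639950673392453126638554354624801, 48096979459305946264288981043435024164,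
    48081402807033789899105563791925193764, 44078080605265284384143169793424369696,
    44078080605265284384144577146833086496, 44078080605265284384143169793424369696,
    48096979459305946264288981043435024164, 48096979459305946264288981043435024164,
    48081402807033789899105563791925193764, 45412521260785654956673171075343985186,
    48096979459305946264288981043435024164, 48096979459305946264288981043435024164,
    48081402807033789899105563791925193764, 50755455892674997478594597435415539494,
    52084683809541235828536610307407425319, 50755455892674997478594597435415539494,
    49421055961358623749241626630281375269, 49415883946908488369830668697139096869,
    54670527824594108148391614780304531496, 56004968479189650468916422553140601386,
    56004968479186023747013980370324038186, 53336087170002192697776384085473173801,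
    53336087170008237234640736862798946601, 53336087170002192697776384085473173801,
    56004968479189650468916422553140601386, 56004968479189650468916422553140601386,
    56004968479186023747013980370324038186, 58673910635290384907568803675127096364,
    62671959014419924213374091885062006319, 62661533775413903756667324892336366639,
    58673910635290384907568803675127096364, 62661533775413903756667324892336366639,
    60008331166237312134079108207935956269, 61337559083103550484021121079927842094,
    62671959014419924213374091885062006319, 62677131028870059592785049818204284719,
    33319477361065817109342452749207868696, 34669494906233337135294010322530735386,
    34653918253342220195201431614225256986, 31985037102614714137815195151106642201,
    32010998190766575704636159665032991001, 31985037102614714137815195151106642201,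
    34669494906233337135294010322530735386, 34669494906233337135294010322530735386,
    34653918253342220195201431614225256986, 35998743264277430694285925585639904539,
    35988358829945126929921281965296390939, 41310483392351715271167886244437562399,
    39986508619575259444971964546389316894, 38657280702709021095029951674397431069,
    39986508619575259444971964546389316894, 41320908550891633174324935351523481119,
    41326080565341768553735893284665759519]

def rows9 : List Nat :=
  [5192376709303639284339114474735872, 5192376709303639284339114474735872,
    5192376709303639284339114474735872, 5192376709303639284339114474735872,
    5192376709303639284339114474733829, 5192376709303639284339114474733824,
    2674073684650340019165483681167052546, 2674073684650340019165483681167049483,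
    2674073684650340019165483681167049474, 3998129587066442989696538620016659203,
    3998129587066442989696538620016656911, 3998129587066442989696538620016656899,
    1329248279125406609815394053324341257, 1329248279125406609815394053324342529,
    1329248279125406609815394053324341257, 1329248279125406609815394053324341249,
    5192376709303639284339114474735877, 5192376709303639284339114474735365,
    5192376709303639284339114474735877, 5192376709303639284339114474735877,
    5192376709303639284339114474735365, 5192376709303639284339114474735878,
    5192376709303639284339114474735877, 5192376709303639284339114474735621,
    2674073684650340019165483681167052554, 2674073684650340019165483681167052043,
    2674073684650340019165483681167052554, 2674073684650340019165483681167052554,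
    2674073684650340019165483681167052555, 2674073684650340019165483681167052556,
    2674073684650340019165483681167052555, 2674073684650340019165483681167052299,
    3998129587066442989696538620016659213, 3998129587066442989696538620016658959,
    3998129587066442989696538620016659213, 3998129587066442989696538620016659215,
    3998129587066442989696538620016658959, 3998129587066442989696538620016659214,
    3998129587066442989696538620016659215, 3998129587066442989696538620016659471,
    1329248279125406609815394053324342535, 1329248279125406609815394053324342281,
    1329248279125406609815394053324342535, 1329248279125406609815394053324342535,
    1329248279125406609815394053324342537, 1329248279125406609815394053324342536,
    1329248279125406609815394053324342537, 1329248279125406609815394053324342793]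


/-- table lookup, with default `0` -/
def nth : List Nat → Nat → Nat
  | [], _ => 0
  | a :: _, 0 => a
  | _ :: l, n + 1 => nth l n

/-- the `k`-th byte of a packed row -/
def ent (row k : Nat) : Nat := Nat.land (Nat.shiftRight row (Nat.mul 8 k)) 255

/-- bound for the cost of reaching offset `o` with sign `t`, stored in a code -/
def mv (c o : Nat) (t : Bool) : Nat :=
  Nat.land (Nat.shiftRight c (Nat.add (Nat.mul 6 o) (cond t 3 0))) 7

/-- the sign stored in a code at offset `o` (`1 ≤ o ≤ 3`) -/
def yv (c o : Nat) : Bool := Nat.beq (Nat.land (Nat.shiftRight c (Nat.add 23 o)) 1) 1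

def costB (a b : Bool) : Nat := cond (xor a b) 1 0

/-- entry check of a transition -/
def chkE (c c' o : Nat) (q x ph t' : Bool) : Bool :=
  let w := mv c' o t'
  let t := !(xor (xor t' ph) q)
  let d := costB (xor t' ph) x
  Nat.ble 4 w ||
    (Nat.ble (Nat.add (mv c 0 t) d) w ||
      ((Nat.ble 1 o && Nat.ble (Nat.add (mv c 1 t) d) w) ||
        ((Nat.ble 2 o && Nat.ble (Nat.add (mv c 2 t) d) w) ||
          (Nat.ble 3 o && Nat.ble (Nat.add (mv c 3 t) d) w))))

def chkE2 (c c' o : Nat) (q x ph : Bool) : Bool :=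
  chkE c c' o q x ph false && chkE c c' o q x ph true

/-- check of a transition from code `c` to code `c'` -/
def chkT (c c' : Nat) (b1 b2 b3 nb : Bool) : Bool :=
  let x0 := yv c 1
  let x1 := xor b1 (yv c 2)
  let x2 := xor b2 (yv c 3)
  (yv c' 1 == false && (yv c' 2 == xor x2 x1 && yv c' 3 == xor nb x1)) &&
  (chkE2 c c' 0 false x0 x1 && (chkE2 c c' 1 b1 x1 x1 &&
    (chkE2 c c' 2 b2 x2 x1 && chkE2 c c' 3 b3 nb x1)))

/-- index of a transition inside a row -/
def tix (b1 b2 b3 nb : Bool) : Nat :=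
  Nat.add (cond b1 8 0) (Nat.add (cond b2 4 0) (Nat.add (cond b3 2 0) (cond nb 1 0)))

def allB (f : Bool → Bool) : Bool := f false && f true

def chkRow (codes' : List Nat) (len : Nat) (c row : Nat) : Bool :=
  allB fun b1 => allB fun b2 => allB fun b3 => allB fun nb =>
    Nat.blt (ent row (tix b1 b2 b3 nb)) len &&
      chkT c (nth codes' (ent row (tix b1 b2 b3 nb))) b1 b2 b3 nb

def chkLayer (codes' : List Nat) (len : Nat) : List Nat → List Nat → Bool
  | [], [] => true
  | c :: cs, r :: rs => chkRow codes' len c r && chkLayer codes' len cs rs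
  | _, _ => false

/-- a code accepts if all entries are at least `4` -/
def acc (c : Nat) : Bool :=
  (Nat.ble 4 (mv c 0 false) && Nat.ble 4 (mv c 0 true)) &&
  ((Nat.ble 4 (mv c 1 false) && Nat.ble 4 (mv c 1 true)) &&
  ((Nat.ble 4 (mv c 2 false) && Nat.ble 4 (mv c 2 true)) &&
   (Nat.ble 4 (mv c 3 false) && Nat.ble 4 (mv c 3 true))))

def finL : List Nat := codes10.map fun c => cond (acc c) 1 0

/-- concatenation of two blocks of `2 ^ k` digits -/
def pr (k W0 W1 : Nat) : Nat := Nat.add W0 (Nat.shiftLeft W1 (Nat.mul 13 (Nat.pow 2 k)))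

def two (w : List Nat) (row k : Nat) : Nat :=
  Nat.add (nth w (ent row k)) (nth w (ent row (Nat.succ k)))

def comb (k : Nat) (w : List Nat) (row : Nat) : Nat :=
  pr (k + 2)
    (pr (k + 1) (pr k (two w row 0) (two w row 2)) (pr k (two w row 4) (two w row 6)))
    (pr (k + 1) (pr k (two w row 8) (two w row 10)) (pr k (two w row 12) (two w row 14)))

/-- vectorised counts; all words over the remaining transitions at once -/
def Wl : List (List Nat) → List Nat
  | [] => finL
  | [tb] => tb.map fun row => two finL row 0
  | tb :: tb' :: tbs => tb.map fun row => comb (3 * tbs.length) (Wl (tb' :: tbs)) row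

def KK : Nat → Nat
  | 0 => 48
  | k + 1 => pr k (KK k) (KK k)

def MM : Nat → Nat
  | 0 => 8064
  | k + 1 => pr k (MM k) (MM k)

def pre (tb : List Nat) (i : Nat) : List Nat → List Nat
  | [] => []
  | c :: cs => ent (nth tb c) i :: ent (nth tb c) (Nat.succ i) :: pre tb i cs

def sumW (w : List Nat) : List Nat → Nat
  | [] => 0
  | c :: cs => Nat.add (nth w c) (sumW w cs)

def startL : List Nat := [0, 2, 4, 6, 7, 5, 3, 1]

def tabs3 : List (List Nat) := [rows3, rows4, rows5, rows6, rows7, rows8, rows9]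

def chkSum (i j : Nat) : Bool :=
  Nat.beq (Nat.land (Nat.add (sumW (Wl tabs3) (pre rows2 j (pre rows1 i startL))) (KK 18)) (MM 18)) 0

def chkSum1 (i : Nat) : Bool :=
  allB fun b1 => allB fun b2 => allB fun b3 => chkSum i (tix b1 b2 b3 false)

theorem ck1 : chkLayer codes2 24 codes1 rows1 = true := by decide +kernel

theorem ck2 : chkLayer codes3 43 codes2 rows2 = true := by decide +kernel

theorem ck3 : chkLayer codes4 88 codes3 rows3 = true := by decide +kernel

theorem ck4 : chkLayer codes5 76 codes4 rows4 = true := by decide +kernel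

theorem ck5 : chkLayer codes6 126 codes5 rows5 = true := by decide +kernel

theorem ck6 : chkLayer codes7 101 codes6 rows6 = true := by decide +kernel

theorem ck7 : chkLayer codes8 119 codes7 rows7 = true := by decide +kernel

theorem ck8 : chkLayer codes9 48 codes8 rows8 = true := by decide +kernel

theorem ck9 : chkLayer codes10 16 codes9 rows9 = true := by decide +kernel

theorem cs0 : chkSum1 0 = true := by decide +kernel

theorem cs1 : chkSum1 2 = true := by decide +kernel

theorem cs2 : chkSum1 4 = true := by decide +kernel

theorem cs3 : chkSum1 6 = true := by decide +kernel

theorem cs4 : chkSum1 8 = true := by decide +kernel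

theorem cs5 : chkSum1 10 = true := by decide +kernel

theorem cs6 : chkSum1 12 = true := by decide +kernel

theorem cs7 : chkSum1 14 = true := by decide +kernel

/-! ### Correctness of the vectorised count -/

theorem nth_map (f : Nat → Nat) (l : List Nat) (c : Nat) :
    nth (l.map f) c = if c < l.length then f (nth l c) else 0 := by
  induction l generalizing c with
  | nil => simp [nth]
  | cons a l ih =>
    cases c with
    | zero => simp [nth]
    | succ c => simp [nth, ih]

/-- transition index determined by the first three bits of a word -/
def ix (l : List Bool) : Nat :=
  tix (l.getD 0 false) (l.getD 1 false) (l.getD 2 false) false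

/-- number of accepted completions from class `c` -/
def Nf : List (List Nat) → Nat → List Bool → Nat
  | [], c, _ => nth finL c
  | tb :: tbs, c, l =>
    if c < tb.length then
      Nf tbs (ent (nth tb c) (ix l)) (l.drop 3) + Nf tbs (ent (nth tb c) (ix l + 1)) (l.drop 3)
    else 0

/-- `W` lists the values of `f` on words of length `k` as digits in base `2 ^ 13` -/
def DigRep : Nat → Nat → (List Bool → Nat) → Prop
  | 0, W, f => W = f []
  | k + 1, W, f => ∃ W0 W1, W = pr k W0 W1 ∧ DigRep k W0 (fun l => f (false :: l)) ∧
      DigRep k W1 (fun l => f (true :: l))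

theorem pr_eq (k W0 W1 : Nat) : pr k W0 W1 = 2 ^ (13 * 2 ^ k) * W1 + W0 := by
  have h : pr k W0 W1 = W0 + W1 <<< (13 * 2 ^ k) := rfl
  rw [h, Nat.shiftLeft_eq]; ring

theorem DigRep.zero (k : Nat) : DigRep k 0 (fun _ => 0) := by
  induction k with
  | zero => rfl
  | succ k ih => exact ⟨0, 0, by rw [pr_eq]; simp, ih, ih⟩

theorem DigRep.add {k W V : Nat} {f g : List Bool → Nat} (h : DigRep k W f) (h' : DigRep k V g) :
    DigRep k (W + V) (fun l => f l + g l) := by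
  induction k generalizing W V f g with
  | zero => simp only [DigRep] at *; rw [h, h']
  | succ k ih =>
    obtain ⟨a, b, h1, h2, h3⟩ := h
    obtain ⟨a', b', h1', h2', h3'⟩ := h'
    refine ⟨a + a', b + b', ?_, ih h2 h2', ih h3 h3'⟩
    rw [h1, h1', pr_eq, pr_eq, pr_eq]; ring

theorem DigRep.lt {k W : Nat} {f : List Bool → Nat} (h : DigRep k W f) (hf : ∀ l, f l ≤ 4096) :
    W + KK k < 2 ^ (13 * 2 ^ k) := by
  induction k generalizing W f with
  | zero => simp only [DigRep, KK] at *; have := hf []; omega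
  | succ k ih =>
    obtain ⟨a, b, h1, h2, h3⟩ := h
    have i1 := ih h2 (fun l => hf _)
    have i2 := ih h3 (fun l => hf _)
    have e : 13 * 2 ^ (k + 1) = 13 * 2 ^ k + 13 * 2 ^ k := by ring
    rw [h1, KK, pr_eq, pr_eq, e, pow_add]
    generalize 2 ^ (13 * 2 ^ k) = B at *
    nlinarith

theorem MM_lt (k : Nat) : MM k < 2 ^ (13 * 2 ^ k) := by
  induction k with
  | zero => decide
  | succ k ih =>
    have e : 13 * 2 ^ (k + 1) = 13 * 2 ^ k + 13 * 2 ^ k := by ring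
    rw [MM, pr_eq, e, pow_add]
    generalize 2 ^ (13 * 2 ^ k) = B at *
    nlinarith

theorem land_split {n a b c d : Nat} (ha : a < 2 ^ n) (hc : c < 2 ^ n)
    (h : (2 ^ n * b + a) &&& (2 ^ n * d + c) = 0) : a &&& c = 0 ∧ b &&& d = 0 := by
  have key : ∀ i, ((2 ^ n * b + a).testBit i && (2 ^ n * d + c).testBit i) = false := by
    intro i
    rw [← Nat.testBit_and, h, Nat.zero_testBit]
  constructor
  · apply Nat.eq_of_testBit_eq
    intro i
    rw [Nat.testBit_and, Nat.zero_testBit]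
    by_cases hi : i < n
    · have := key i
      rw [Nat.testBit_two_pow_mul_add _ ha, Nat.testBit_two_pow_mul_add _ hc] at this
      simpa [hi] using this
    · have : a < 2 ^ i := lt_of_lt_of_le ha (Nat.pow_le_pow_right (by norm_num) (by omega))
      rw [Nat.testBit_lt_two_pow this]; rfl
  · apply Nat.eq_of_testBit_eq
    intro i
    rw [Nat.testBit_and, Nat.zero_testBit]
    have := key (n + i)
    rw [Nat.testBit_two_pow_mul_add _ ha, Nat.testBit_two_pow_mul_add _ hc] at this
    simpa using this

theorem digit_base (W : Nat) (hW : W < 4097) (h : (W + 48) &&& 8064 = 0) : W ≤ 79 := by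
  have e : W + 48 = 2 ^ 7 * ((W + 48) / 128) + (W + 48) % 128 := by omega
  have e' : 8064 = 2 ^ 7 * 63 + 0 := by norm_num
  rw [e, e'] at h
  have h2 := (land_split (by omega) (by norm_num) h).2
  have h3 : (W + 48) / 128 &&& 63 = (W + 48) / 128 % 64 :=
    Nat.and_two_pow_sub_one_eq_mod _ 6
  omega

theorem DigRep.check {k W : Nat} {f : List Bool → Nat} (h : DigRep k W f) (hf : ∀ l, f l ≤ 4096)
    (hc : (W + KK k) &&& MM k = 0) (l : List Bool) (hl : l.length = k) : f l ≤ 79 := by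
  induction k generalizing W f l with
  | zero =>
    obtain rfl : l = [] := List.length_eq_zero_iff.mp hl
    simp only [DigRep, KK, MM] at *
    rw [← h]
    exact digit_base W (by have := hf []; omega) hc
  | succ k ih =>
    obtain ⟨a, b, h1, h2, h3⟩ := h
    have i1 := h2.lt (fun l => hf _)
    have e : W + KK (k + 1) = 2 ^ (13 * 2 ^ k) * (b + KK k) + (a + KK k) := by
      rw [h1, KK, pr_eq, pr_eq]; ring
    rw [e, MM, pr_eq] at hc
    obtain ⟨c1, c2⟩ := land_split i1 (MM_lt k) hc
    cases l with
    | nil => simp at hl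
    | cons x l =>
      have hl' : l.length = k := by simpa using hl
      cases x
      · exact ih h2 (fun l => hf _) c1 l hl'
      · exact ih h3 (fun l => hf _) c2 l hl'

theorem Wl_rep (tb : List Nat) (tbs : List (List Nat)) (c : Nat) :
    DigRep (3 * tbs.length) (nth (Wl (tb :: tbs)) c) (Nf (tb :: tbs) c) := by
  induction tbs generalizing tb c with
  | nil =>
    simp only [Wl, DigRep, List.length_nil, Nf, nth_map]
    rfl
  | cons tb' tbs ih =>
    simp only [Wl, nth_map]
    by_cases hc : c < tb.length
    · rw [if_pos hc]
      have leaf : ∀ b1 b2 b3 : Bool, DigRep (3 * tbs.length)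
          (two (Wl (tb' :: tbs)) (nth tb c) (tix b1 b2 b3 false))
          (fun l => Nf (tb :: tb' :: tbs) c (b1 :: b2 :: b3 :: l)) := by
        intro b1 b2 b3
        have := (ih tb' (ent (nth tb c) (tix b1 b2 b3 false))).add
          (ih tb' (ent (nth tb c) (tix b1 b2 b3 false + 1)))
        have e : (fun l => Nf (tb :: tb' :: tbs) c (b1 :: b2 :: b3 :: l)) =
            fun l => Nf (tb' :: tbs) (ent (nth tb c) (tix b1 b2 b3 false)) l +
              Nf (tb' :: tbs) (ent (nth tb c) (tix b1 b2 b3 false + 1)) l := by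
          funext l
          conv_lhs => rw [Nf]
          rw [if_pos hc]
          rfl
        rw [e]
        exact this
      exact ⟨_, _, rfl,
        ⟨_, _, rfl, ⟨_, _, rfl, leaf false false false, leaf false false true⟩,
          ⟨_, _, rfl, leaf false true false, leaf false true true⟩⟩,
        ⟨_, _, rfl, ⟨_, _, rfl, leaf true false false, leaf true false true⟩,
          ⟨_, _, rfl, leaf true true false, leaf true true true⟩⟩⟩
    · rw [if_neg hc]
      have e : Nf (tb :: tb' :: tbs) c = fun _ => 0 := by
        funext l
        rw [Nf, if_neg hc]
      rw [e]
      exact DigRep.zero _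

theorem finL_le (c : Nat) : nth finL c ≤ 1 := by
  rw [finL, nth_map]
  split
  · cases acc (nth codes10 c) <;> simp
  · simp

theorem Nf_le (tbs : List (List Nat)) (c : Nat) (l : List Bool) :
    Nf tbs c l ≤ 2 ^ tbs.length := by
  induction tbs generalizing c l with
  | nil => exact finL_le c
  | cons tb tbs ih =>
    rw [Nf]
    split
    · have h1 := ih (ent (nth tb c) (ix l)) (l.drop 3)
      have h2 := ih (ent (nth tb c) (ix l + 1)) (l.drop 3)
      rw [List.length_cons, pow_succ]; omega
    · positivity

/-- sum of the counts over a list of classes -/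
def sumN (tbs : List (List Nat)) (cs : List Nat) (l : List Bool) : Nat :=
  (cs.map fun c => Nf tbs c l).sum

theorem sumN_pre (tb : List Nat) (tbs : List (List Nat)) (cs : List Nat) (l : List Bool) :
    sumN (tb :: tbs) cs l ≤ sumN tbs (pre tb (ix l) cs) (l.drop 3) := by
  induction cs with
  | nil => simp [sumN]
  | cons c cs ih =>
    simp only [sumN, List.map_cons, List.sum_cons, pre] at *
    have : Nf (tb :: tbs) c l ≤ Nf tbs (ent (nth tb c) (ix l)) (l.drop 3) +
        Nf tbs (ent (nth tb c) (ix l).succ) (l.drop 3) := by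
      rw [Nf]; split
      · exact le_rfl
      · exact Nat.zero_le _
    omega

theorem sumW_rep (tb : List Nat) (tbs : List (List Nat)) (cs : List Nat) :
    DigRep (3 * tbs.length) (sumW (Wl (tb :: tbs)) cs) (sumN (tb :: tbs) cs) := by
  induction cs with
  | nil => exact DigRep.zero _
  | cons c cs ih => exact (Wl_rep tb tbs c).add ih

theorem sumN_le (tbs : List (List Nat)) (cs : List Nat) (l : List Bool) :
    sumN tbs cs l ≤ cs.length * 2 ^ tbs.length := by
  induction cs with
  | nil => simp [sumN]
  | cons c cs ih =>
    simp only [sumN, List.map_cons, List.sum_cons, List.length_cons] at *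
    have := Nf_le tbs c l
    rw [add_mul]; omega

theorem allB_eq {f : Bool → Bool} (h : allB f = true) (b : Bool) : f b = true := by
  simp only [allB, Bool.and_eq_true] at h
  cases b
  · exact h.1
  · exact h.2

theorem pre_length (tb : List Nat) (i : Nat) (cs : List Nat) :
    (pre tb i cs).length = 2 * cs.length := by
  induction cs with
  | nil => rfl
  | cons c cs ih => simp only [pre, List.length_cons, ih]; omega

theorem chkSum_all (a b c d e f : Bool) :
    chkSum (tix a b c false) (tix d e f false) = true := by
  have h : chkSum1 (tix a b c false) = true := by
    cases a <;> cases b <;> cases c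
    · exact cs0
    · exact cs1
    · exact cs2
    · exact cs3
    · exact cs4
    · exact cs5
    · exact cs6
    · exact cs7
  exact allB_eq (allB_eq (allB_eq h d) e) f

/-- The computation: all words of length `24` have count at most `79`. -/
theorem main_count (l : List Bool) (hl : l.length = 24) :
    sumN (rows1 :: rows2 :: tabs3) startL l ≤ 79 := by
  refine (sumN_pre _ _ _ _).trans ((sumN_pre _ _ _ _).trans ?_)
  have hc : chkSum (ix l) (ix (l.drop 3)) = true := chkSum_all _ _ _ _ _ _
  have hr := sumW_rep rows3 [rows4, rows5, rows6, rows7, rows8, rows9]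
    (pre rows2 (ix (l.drop 3)) (pre rows1 (ix l) startL))
  refine DigRep.check hr ?_ (Nat.eq_of_beq_eq_true hc) _ (by simp [hl])
  intro l'
  refine (sumN_le _ _ _).trans ?_
  rw [pre_length, pre_length]
  simp [startL]


/-! ### Semantics: cheap reorientations and the greedy top travel -/

theorem rowChange_some {B : ℕ → ℕ → ℤ} {n i c d : ℕ} (h1 : c < d) (h2 : d ≤ n)
    (h3 : B i d ≠ B i c) : ∃ e, rowChange B n i c = some e ∧ c < e ∧ e ≤ d := by
  cases h : rowChange B n i c with
  | none =>
    unfold rowChange at h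
    rw [List.find?_range_eq_none] at h
    have := h d (by omega)
    simp [h1, h3] at this
  | some e =>
    unfold rowChange at h
    rw [List.find?_range_eq_some] at h
    obtain ⟨ha, hb, hc⟩ := h
    simp only [decide_eq_true_eq] at ha
    refine ⟨e, rfl, ha.1, ?_⟩
    by_contra hlt
    have := hc d (by omega)
    simp [h1, h3] at this

theorem greedy {B : ℕ → ℕ → ℤ} {n m : ℕ} {p : ℕ → ℕ} (hp1 : 1 ≤ p 1)
    (hpn : ∀ k, 1 ≤ k → k ≤ m → p k ≤ n)
    (hlt : ∀ k, 1 ≤ k → k < m → p k < p (k + 1))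
    (hne : ∀ k, 1 ≤ k → k < m → B k (p k) ≠ B k (p (k + 1)))
    (k : ℕ) (hk : k + 1 ≤ m) : ∃ c, ttEntry B n (k + 1) = some c ∧ c ≤ p (k + 1) := by
  induction k with
  | zero => exact ⟨1, rfl, hp1⟩
  | succ k ih =>
    obtain ⟨c, hc, hcp⟩ := ih (by omega)
    have h1 := hlt (k + 1) (by omega) (by omega)
    have h2 := hne (k + 1) (by omega) (by omega)
    have h3 := hpn (k + 1 + 1) (by omega) (by omega)
    have : ∃ e, rowChange B n (k + 1) c = some e ∧ c < e ∧ e ≤ p (k + 1 + 1) := by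
      by_cases hb : B (k + 1) (p (k + 1)) = B (k + 1) c
      · exact rowChange_some (by omega) h3 (by rw [← hb]; exact h2.symm)
      · have hcne : c ≠ p (k + 1) := by
          rintro rfl; exact hb rfl
        obtain ⟨e, he1, he2, he3⟩ := rowChange_some (n := n) (d := p (k + 1)) (by omega) (by omega) hb
        exact ⟨e, he1, he2, by omega⟩
    obtain ⟨e, he1, _, he3⟩ := this
    refine ⟨e, ?_, he3⟩
    show (ttEntry B n (k + 1)).bind (rowChange B n (k + 1)) = some e
    rw [hc]; exact he1

/-- signs as Booleans, row `10` being a copy of row `9` -/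
def al (A : ℕ → ℕ → ℤ) (i j : ℕ) : Bool := decide (A (min i 9) j = 1)

def xx (A : ℕ → ℕ → ℤ) (R : Finset ℕ) (i j : ℕ) : Bool := xor (al A i j) (decide (j ∈ R))

def vv (A : ℕ → ℕ → ℤ) (R S : Finset ℕ) (i j : ℕ) : Bool := xor (xx A R i j) (decide (j ∈ S))

theorem vv_ne {A : ℕ → ℕ → ℤ} (hA : IsSignMatrix 9 13 A) (R S : Finset ℕ) {i j j' : ℕ}
    (hi : 1 ≤ i) (hi' : i ≤ 9) (hj : 1 ≤ j) (hj' : j ≤ 13) (hk : 1 ≤ j') (hk' : j' ≤ 13)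
    (h : vv A R S i j ≠ vv A R S i j') :
    reorient (reorient A R) S i j ≠ reorient (reorient A R) S i j' := by
  have hm : min i 9 = i := by omega
  simp only [vv, xx, al, hm] at h
  simp only [reorient]
  rcases hA i j hi hi' hj hj' with e | e <;> rcases hA i j' hi hi' hk hk' with e' | e' <;>
    by_cases h1 : j ∈ R <;> by_cases h2 : j ∈ S <;>
    by_cases h3 : j' ∈ R <;> by_cases h4 : j' ∈ S <;> simp [h1, h2, h3, h4, e, e'] at h ⊢

/-- after changing at most `w` columns an alternating path reaches column `i + o` in row `i`
where the sign is `t` -/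
def Reach (A : ℕ → ℕ → ℤ) (R : Finset ℕ) (i o : ℕ) (t : Bool) (w : ℕ) : Prop :=
  ∃ (p : ℕ → ℕ) (S : Finset ℕ), 1 ≤ p 1 ∧ p i = i + o ∧
    (∀ k, 1 ≤ k → k < i → p k < p (k + 1)) ∧ (∀ k, 1 ≤ k → k ≤ i → 1 ≤ p k ∧ p k ≤ i + o) ∧
    S ⊆ Finset.Icc 1 (i + o) ∧ S.card ≤ w ∧
    (∀ k, 1 ≤ k → k < i → vv A R S k (p k) ≠ vv A R S k (p (k + 1))) ∧
    vv A R S i (i + o) = t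

theorem Reach.mono {A : ℕ → ℕ → ℤ} {R : Finset ℕ} {i o : ℕ} {t : Bool} {w w' : ℕ}
    (h : Reach A R i o t w) (hw : w ≤ w') : Reach A R i o t w' := by
  obtain ⟨p, S, h1, h2, h3, h4, h5, h6, h7⟩ := h
  exact ⟨p, S, h1, h2, h3, h4, h5, by omega, h7⟩

theorem Reach.start (A : ℕ → ℕ → ℤ) (R : Finset ℕ) (t : Bool) :
    Reach A R 1 0 t (costB t (xx A R 1 1)) := by
  by_cases h : xx A R 1 1 = t
  · refine ⟨fun _ => 1, ∅, le_rfl, rfl, fun k _ _ => by omega, fun k _ _ => by simp, by simp,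
      by simp, fun k _ _ => by omega, ?_⟩
    simp [vv, h]
  · refine ⟨fun _ => 1, {1}, le_rfl, rfl, fun k _ _ => by omega, fun k _ _ => by simp, by simp,
      ?_, fun k _ _ => by omega, ?_⟩
    · revert h
      cases xx A R 1 1 <;> cases t <;> simp [costB]
    · revert h
      simp only [vv]
      cases xx A R 1 1 <;> cases t <;> simp

theorem Reach.step {A : ℕ → ℕ → ℤ} {R : Finset ℕ} {i o o' : ℕ} {t t' : Bool} {w : ℕ} (hi : 1 ≤ i)
    (h : Reach A R i o t w) (ho : o ≤ o')
    (ht : t = !(xor t' (xor (al A i (i + 1 + o')) (al A (i + 1) (i + 1 + o'))))) :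
    Reach A R (i + 1) o' t' (w + costB t' (xx A R (i + 1) (i + 1 + o'))) := by
  obtain ⟨p, S, h1, h2, h3, h4, h5, h6, h7, h8⟩ := h
  have hjS : ∀ T : Finset ℕ, T ⊆ Finset.Icc 1 (i + o) → i + 1 + o' ∉ T := by
    intro T hT hm
    have := Finset.mem_Icc.mp (hT hm)
    omega
  have hjS := hjS S h5
  have hS' : ∃ S' : Finset ℕ, S' ⊆ Finset.Icc 1 (i + 1 + o') ∧
      S'.card ≤ w + costB t' (xx A R (i + 1) (i + 1 + o')) ∧
      (∀ j, j ≤ i + o → (j ∈ S' ↔ j ∈ S)) ∧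
      vv A R S' (i + 1) (i + 1 + o') = t' := by
    have hsub : S ⊆ Finset.Icc 1 (i + 1 + o') :=
      h5.trans (Finset.Icc_subset_Icc le_rfl (by omega))
    by_cases hx : xx A R (i + 1) (i + 1 + o') = t'
    · refine ⟨S, hsub, by omega, fun _ _ => Iff.rfl, ?_⟩
      simp [vv, hjS, hx]
    · refine ⟨insert (i + 1 + o') S, ?_, ?_, ?_, ?_⟩
      · intro j hj
        rcases Finset.mem_insert.mp hj with rfl | hj
        · simp only [Finset.mem_Icc]; omega
        · exact hsub hj
      · rw [Finset.card_insert_of_notMem hjS]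
        have : costB t' (xx A R (i + 1) (i + 1 + o')) = 1 := by
          revert hx
          cases xx A R (i + 1) (i + 1 + o') <;> cases t' <;> simp [costB]
        omega
      · intro j hj
        rw [Finset.mem_insert]
        constructor
        · rintro (rfl | hj')
          · omega
          · exact hj'
        · exact Or.inr
      · revert hx
        simp only [vv, Finset.mem_insert_self]
        cases xx A R (i + 1) (i + 1 + o') <;> cases t' <;> simp
  obtain ⟨S', g1, g2, g3, g4⟩ := hS'
  have hv : ∀ k j, j ≤ i + o → vv A R S' k j = vv A R S k j := by
    intro k j hj
    simp only [vv, g3 j hj]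
  refine ⟨fun k => if k ≤ i then p k else i + 1 + o', S', by simpa [hi] using h1, by simp, ?_, ?_,
    g1, g2, ?_, g4⟩
  · intro k hk hk'
    by_cases hki : k < i
    · have := h3 k hk hki
      simp only [show k ≤ i by omega, show k + 1 ≤ i by omega, if_true]
      exact this
    · have : k = i := by omega
      subst this
      simp; omega
  · intro k hk hk'
    by_cases hki : k ≤ i
    · have := h4 k hk hki
      simp only [hki, if_true]; omega
    · simp only [hki, if_false]; omega
  · intro k hk hk'
    by_cases hki : k < i
    · have := h7 k hk hki
      simp only [show k ≤ i by omega, show k + 1 ≤ i by omega, if_true]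
      rw [hv _ _ (h4 k hk (by omega)).2, hv _ _ (h4 (k + 1) (by omega) (by omega)).2]
      exact this
    · have : k = i := by omega
      subst this
      simp only [le_refl, if_true, show ¬ (k + 1 ≤ k) by omega, if_false]
      rw [h2, hv _ _ le_rfl, h8, ht, ← g4]
      simp only [vv, xx]
      cases al A k (k + 1 + o') <;> cases al A (k + 1) (k + 1 + o') <;>
        cases decide (k + 1 + o' ∈ R) <;> cases decide (k + 1 + o' ∈ S') <;> simp

theorem Reach.final {A : ℕ → ℕ → ℤ} (hA : IsSignMatrix 9 13 A) {R : Finset ℕ} {o : ℕ} {t : Bool}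
    {w : ℕ} (hR : IsNeighborly (reorient A R) 9 13 3) (ho : o ≤ 3) (h : Reach A R 10 o t w) :
    4 ≤ w := by
  by_contra hw
  obtain ⟨p, S, h1, h2, h3, h4, h5, h6, h7, h8⟩ := h
  apply hR S (h5.trans (Finset.Icc_subset_Icc le_rfl (by omega))) (by omega)
  have := greedy (B := reorient (reorient A R) S) (n := 13) (m := 10) (p := p) h1
    (fun k hk hk' => by have := h4 k hk hk'; omega) h3
    (fun k hk hk' => by
      have a1 := h4 k hk (by omega)
      have a2 := h4 (k + 1) (by omega) (by omega)
      exact vv_ne hA R S hk (by omega) a1.1 (by omega) a2.1 (by omega) (h7 k hk hk'))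
    9 (by omega)
  obtain ⟨c, hc, _⟩ := this
  show (ttEntry _ 13 10).isSome
  rw [hc]; rfl

/-! ### The automaton describes the reachable positions -/

def qq (A : ℕ → ℕ → ℤ) (i o : ℕ) : Bool := xor (al A i (i + 1 + o)) (al A (i + 1) (i + 1 + o))

def bb (A : ℕ → ℕ → ℤ) (i o : ℕ) : Bool := xor (qq A i o) (qq A i 0)

/-- code `c` is valid for `R` in row `i`, up to the global sign `g` -/
def CodeOK (A : ℕ → ℕ → ℤ) (R : Finset ℕ) (i : ℕ) (g : Bool) (c : ℕ) : Prop :=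
  (∀ o, 1 ≤ o → o ≤ 3 → xx A R i (i + o) = xor (yv c o) g) ∧
  ∀ o, o ≤ 3 → ∀ t, 4 ≤ mv c o t ∨ Reach A R i o (xor t g) (mv c o t)

theorem xx_succ (A : ℕ → ℕ → ℤ) (R : Finset ℕ) (i o : ℕ) :
    xx A R (i + 1) (i + 1 + o) = xor (xx A R i (i + (o + 1))) (qq A i o) := by
  have : i + (o + 1) = i + 1 + o := by omega
  rw [this]
  simp only [xx, qq]
  cases al A i (i + 1 + o) <;> cases al A (i + 1) (i + 1 + o) <;>
    cases decide (i + 1 + o ∈ R) <;> rfl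

theorem chkE_spec {c c' o : Nat} {q x ph t' : Bool} (h : chkE c c' o q x ph t' = true) :
    4 ≤ mv c' o t' ∨ ∃ o2, o2 ≤ o ∧ o2 ≤ 3 ∧
      mv c o2 (!(xor (xor t' ph) q)) + costB (xor t' ph) x ≤ mv c' o t' := by
  simp only [chkE, Bool.or_eq_true, Bool.and_eq_true, Nat.ble_eq] at h
  rcases h with h | h | ⟨h1, h⟩ | ⟨h1, h⟩ | ⟨h1, h⟩
  · exact Or.inl h
  · exact Or.inr ⟨0, by omega, by omega, h⟩
  · exact Or.inr ⟨1, by omega, by omega, h⟩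
  · exact Or.inr ⟨2, by omega, by omega, h⟩
  · exact Or.inr ⟨3, by omega, by omega, h⟩

theorem chkE2_spec {c c' o : Nat} {q x ph : Bool} (h : chkE2 c c' o q x ph = true) (t : Bool) :
    chkE c c' o q x ph t = true := by
  simp only [chkE2, Bool.and_eq_true] at h
  cases t
  · exact h.1
  · exact h.2

theorem Reach.stepE {A : ℕ → ℕ → ℤ} {R : Finset ℕ} {i : ℕ} {g : Bool} {c c' : ℕ} (hi : 1 ≤ i)
    (h : CodeOK A R i g c) {o : ℕ} {x ph : Bool}
    (hx : xx A R (i + 1) (i + 1 + o) = xor x (xor g (qq A i 0)))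
    (hc : chkE2 c c' o (bb A i o) x ph = true) (t : Bool) :
    4 ≤ mv c' o t ∨ Reach A R (i + 1) o (xor t (xor (xor g (qq A i 0)) ph)) (mv c' o t) := by
  rcases chkE_spec (chkE2_spec hc t) with h4 | ⟨o2, ho, ho3, hle⟩
  · exact Or.inl h4
  · by_cases h4 : 4 ≤ mv c' o t
    · exact Or.inl h4
    · right
      rcases h.2 o2 ho3 (!(xor (xor t ph) (bb A i o))) with h5 | h5
      · omega
      · refine (Reach.step (t' := xor t (xor (xor g (qq A i 0)) ph)) hi h5 ho ?_).mono ?_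
        · show _ = !(xor _ (qq A i o))
          simp only [bb]
          generalize qq A i o = a
          generalize qq A i 0 = b
          cases t <;> cases ph <;> cases g <;> cases a <;> cases b <;> rfl
        · refine le_trans (le_of_eq ?_) hle
          rw [hx]
          congr 1
          generalize qq A i 0 = b
          simp only [costB]
          cases t <;> cases ph <;> cases g <;> cases b <;> cases x <;> rfl

theorem CodeOK.step {A : ℕ → ℕ → ℤ} {R : Finset ℕ} {i : ℕ} {g : Bool} {c c' : ℕ} {nb : Bool}
    (hi : 1 ≤ i) (h : CodeOK A R i g c)
    (hnb : xx A R (i + 1) (i + 1 + 3) = xor nb (xor g (qq A i 0)))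
    (hc : chkT c c' (bb A i 1) (bb A i 2) (bb A i 3) nb = true) :
    CodeOK A R (i + 1) (xor (xor g (qq A i 0)) (xor (bb A i 1) (yv c 2))) c' := by
  simp only [chkT, Bool.and_eq_true, beq_iff_eq] at hc
  obtain ⟨⟨y1, y2, y3⟩, e0, e1, e2, e3⟩ := hc
  have x0 : xx A R (i + 1) (i + 1 + 0) = xor (yv c 1) (xor g (qq A i 0)) := by
    rw [xx_succ, h.1 1 (by omega) (by omega), Bool.xor_assoc]
  have x1 : xx A R (i + 1) (i + 1 + 1) = xor (xor (bb A i 1) (yv c 2)) (xor g (qq A i 0)) := by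
    rw [xx_succ, h.1 2 (by omega) (by omega), bb]
    cases yv c 2 <;> cases qq A i 0 <;> cases qq A i 1 <;> cases g <;> rfl
  have x2 : xx A R (i + 1) (i + 1 + 2) = xor (xor (bb A i 2) (yv c 3)) (xor g (qq A i 0)) := by
    rw [xx_succ, h.1 3 (by omega) (by omega), bb]
    cases yv c 3 <;> cases qq A i 0 <;> cases qq A i 2 <;> cases g <;> rfl
  have b0 : bb A i 0 = false := by simp [bb]
  rw [← b0] at e0
  constructor
  · intro o ho ho'
    interval_cases o
    · rw [x1, y1]
      generalize xor (bb A i 1) (yv c 2) = a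
      generalize xor g (qq A i 0) = b
      revert a b; decide
    · rw [x2, y2]
      generalize xor (bb A i 1) (yv c 2) = a
      generalize xor (bb A i 2) (yv c 3) = a'
      generalize xor g (qq A i 0) = b
      revert a a' b; decide
    · rw [hnb, y3]
      generalize xor (bb A i 1) (yv c 2) = a
      generalize xor g (qq A i 0) = b
      cases a <;> cases nb <;> cases b <;> rfl
  · intro o ho t
    interval_cases o
    · exact Reach.stepE hi h x0 e0 t
    · exact Reach.stepE hi h x1 e1 t
    · exact Reach.stepE hi h x2 e2 t
    · exact Reach.stepE hi h hnb e3 t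

/-! ### Counting along the automaton -/

theorem chkLayer_spec {cds' : List Nat} {len : Nat} {cds tb : List Nat}
    (h : chkLayer cds' len cds tb = true) :
    tb.length = cds.length ∧
      ∀ c, c < cds.length → chkRow cds' len (nth cds c) (nth tb c) = true := by
  induction cds generalizing tb with
  | nil =>
    cases tb with
    | nil => simp
    | cons r rs => simp [chkLayer] at h
  | cons a cs ih =>
    cases tb with
    | nil => simp [chkLayer] at h
    | cons r rs =>
      simp only [chkLayer, Bool.and_eq_true] at h
      obtain ⟨h1, h2⟩ := ih h.2
      refine ⟨by simp [h1], ?_⟩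
      intro c hc
      cases c with
      | zero => exact h.1
      | succ c => exact h2 c (by simpa using hc)

theorem chkRow_spec {cds' : List Nat} {len c row : Nat} (h : chkRow cds' len c row = true)
    (b1 b2 b3 nb : Bool) : ent row (tix b1 b2 b3 nb) < len ∧
      chkT c (nth cds' (ent row (tix b1 b2 b3 nb))) b1 b2 b3 nb = true := by
  have h := allB_eq (allB_eq (allB_eq (allB_eq h b1) b2) b3) nb
  rw [Bool.and_eq_true] at h
  exact ⟨by simpa [Nat.blt_eq] using h.1, h.2⟩

def ChainOK : List (List Nat) → List Nat → Prop
  | [], cds => cds = codes10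
  | tb :: tbs, cds => ∃ cds', chkLayer cds' cds'.length cds tb = true ∧ ChainOK tbs cds'

theorem chain_all : ChainOK (rows1 :: rows2 :: tabs3) codes1 :=
  ⟨_, ck1, _, ck2, _, ck3, _, ck4, _, ck5, _, ck6, _, ck7, _, ck8, _, ck9, rfl⟩

def bitsL (A : ℕ → ℕ → ℤ) : ℕ → ℕ → List Bool
  | _, 0 => []
  | _, 1 => []
  | i, n + 2 => bb A i 1 :: bb A i 2 :: bb A i 3 :: bitsL A (i + 1) (n + 1)

theorem qq_nine (A : ℕ → ℕ → ℤ) (o : ℕ) : qq A 9 o = false := by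
  simp [qq, al]

theorem bits_step (A : ℕ → ℕ → ℤ) (i n : ℕ) (h : n + 1 + i = 10) :
    ix (bitsL A i (n + 1)) = tix (bb A i 1) (bb A i 2) (bb A i 3) false ∧
      (bitsL A i (n + 1)).drop 3 = bitsL A (i + 1) n := by
  cases n with
  | zero =>
    obtain rfl : i = 9 := by omega
    simp only [bb, qq_nine]
    exact ⟨rfl, rfl⟩
  | succ n => exact ⟨rfl, rfl⟩

theorem tix_true (b1 b2 b3 : Bool) : tix b1 b2 b3 false + 1 = tix b1 b2 b3 true := rfl

theorem count_le {A : ℕ → ℕ → ℤ} (hA : IsSignMatrix 9 13 A) (tbs : List (List Nat)) :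
    ∀ (cds : List Nat) (i : ℕ) (g : Bool) (c : ℕ) (X : Finset (Finset ℕ)), ChainOK tbs cds →
    1 ≤ i → tbs.length + i = 10 → c < cds.length →
    (∀ R ∈ X, R ⊆ Finset.Icc 1 13 ∧ IsNeighborly (reorient A R) 9 13 3 ∧
      CodeOK A R i g (nth cds c)) →
    (∀ R ∈ X, ∀ R' ∈ X, ∀ j, j ≤ i + 3 → (j ∈ R ↔ j ∈ R')) →
    X.card ≤ Nf tbs c (bitsL A i tbs.length) := by
  induction tbs with
  | nil =>
    intro cds i g c X hch hi hlen hc hX hag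
    obtain rfl : i = 10 := by simpa using hlen
    have hch : cds = codes10 := hch
    subst hch
    rcases X.eq_empty_or_nonempty with rfl | ⟨R, hR⟩
    · simp
    · have h1 : X.card ≤ 1 := by
        rw [Finset.card_le_one]
        intro R1 hR1 R2 hR2
        ext j
        by_cases hj : j ≤ 13
        · exact hag R1 hR1 R2 hR2 j hj
        · constructor
          · intro h; have := Finset.mem_Icc.mp ((hX R1 hR1).1 h); omega
          · intro h; have := Finset.mem_Icc.mp ((hX R2 hR2).1 h); omega
      have h2 : acc (nth codes10 c) = true := by
        obtain ⟨_, hn, hco⟩ := hX R hR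
        have key : ∀ o, o ≤ 3 → ∀ t, 4 ≤ mv (nth codes10 c) o t := by
          intro o ho t
          rcases hco.2 o ho t with h | h
          · exact h
          · exact h.final hA hn ho
        simp only [acc, Bool.and_eq_true, Nat.ble_eq]
        exact ⟨⟨key 0 (by omega) _, key 0 (by omega) _⟩, ⟨key 1 (by omega) _, key 1 (by omega) _⟩,
          ⟨key 2 (by omega) _, key 2 (by omega) _⟩, ⟨key 3 (by omega) _, key 3 (by omega) _⟩⟩
      simp only [Nf, finL, nth_map, hc, if_true, h2, cond_true]
      exact h1
  | cons tb tbs ih =>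
    intro cds i g c X hch hi hlen hc hX hag
    obtain ⟨cds', hL, hch'⟩ := hch
    obtain ⟨hl, hrow⟩ := chkLayer_spec hL
    have hrow := chkRow_spec (hrow c hc)
    have hlen' : tbs.length + 1 + i = 10 := by simpa using hlen
    obtain ⟨hb1, hb2⟩ := bits_step A i tbs.length hlen'
    have piece : ∀ nb : Bool,
        (X.filter fun R => xx A R (i + 1) (i + 1 + 3) = xor nb (xor g (qq A i 0))).card ≤
        Nf tbs (ent (nth tb c) (tix (bb A i 1) (bb A i 2) (bb A i 3) nb))
          (bitsL A (i + 1) tbs.length) := by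
      intro nb
      obtain ⟨ht, hT⟩ := hrow (bb A i 1) (bb A i 2) (bb A i 3) nb
      refine ih cds' (i + 1) (xor (xor g (qq A i 0)) (xor (bb A i 1) (yv (nth cds c) 2))) _ _ hch'
        (by omega) (by omega) ht ?_ ?_
      · intro R hR
        rw [Finset.mem_filter] at hR
        obtain ⟨a1, a2, a3⟩ := hX R hR.1
        exact ⟨a1, a2, a3.step hi hR.2 hT⟩
      · intro R hR R' hR' j hj
        rw [Finset.mem_filter] at hR hR'
        by_cases hj' : j ≤ i + 3
        · exact hag R hR.1 R' hR'.1 j hj'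
        · obtain rfl : j = i + 1 + 3 := by omega
          have := hR.2.trans hR'.2.symm
          simp only [xx] at this
          simpa using this
    have hsub : X ⊆ (X.filter fun R => xx A R (i + 1) (i + 1 + 3) = xor false (xor g (qq A i 0))) ∪
        (X.filter fun R => xx A R (i + 1) (i + 1 + 3) = xor true (xor g (qq A i 0))) := by
      intro R hR
      rw [Finset.mem_union, Finset.mem_filter, Finset.mem_filter]
      generalize xx A R (i + 1) (i + 1 + 3) = a
      generalize xor g (qq A i 0) = b
      cases a <;> cases b <;> simp [hR]
    have h1 := (Finset.card_le_card hsub).trans (Finset.card_union_le _ _)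
    have h2 := piece false
    have h3 := piece true
    rw [List.length_cons, Nf, if_pos (by omega), hb1, hb2, tix_true]
    omega

/-! ### Normalisation and conclusion -/

theorem find_congr {p q : ℕ → Bool} (l : List ℕ) (h : ∀ a ∈ l, p a = q a) :
    l.find? p = l.find? q := by
  induction l with
  | nil => rfl
  | cons a l ih =>
    rw [List.find?_cons, List.find?_cons, h a (by simp), ih (fun b hb => h b (by simp [hb]))]

theorem rowChange_le {B : ℕ → ℕ → ℤ} {n i c e : ℕ} (h : rowChange B n i c = some e) :
    1 ≤ e ∧ e ≤ n := by
  unfold rowChange at h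
  rw [List.find?_range_eq_some] at h
  obtain ⟨ha, hb, _⟩ := h
  simp only [decide_eq_true_eq] at ha
  simp only [List.mem_range] at hb
  omega

theorem tt_congr {B B' : ℕ → ℕ → ℤ} {n : ℕ} (hn : 1 ≤ n)
    (h : ∀ i c c', 1 ≤ c → c ≤ n → 1 ≤ c' → c' ≤ n → (B i c' ≠ B i c ↔ B' i c' ≠ B' i c)) (k : ℕ) :
    ttEntry B n (k + 1) = ttEntry B' n (k + 1) ∧
      ∀ c, ttEntry B n (k + 1) = some c → 1 ≤ c ∧ c ≤ n := by
  induction k with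
  | zero =>
    refine ⟨rfl, ?_⟩
    intro c hc
    have : 1 = c := by simpa [ttEntry] using hc
    omega
  | succ k ih =>
    obtain ⟨h1, h2⟩ := ih
    have e1 : ttEntry B n (k + 1 + 1) = (ttEntry B n (k + 1)).bind (rowChange B n (k + 1)) := rfl
    have e2 : ttEntry B' n (k + 1 + 1) = (ttEntry B' n (k + 1)).bind (rowChange B' n (k + 1)) := rfl
    rw [e1, e2, ← h1]
    cases hb : ttEntry B n (k + 1) with
    | none => simp
    | some c =>
      obtain ⟨hc1, hc2⟩ := h2 c hb
      refine ⟨?_, fun e he => rowChange_le he⟩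
      show rowChange B n (k + 1) c = rowChange B' n (k + 1) c
      unfold rowChange
      apply find_congr
      intro d hd
      rw [List.mem_range] at hd
      rw [decide_eq_decide]
      constructor
      · rintro ⟨h3, h4⟩
        exact ⟨h3, (h (k + 1) c d hc1 hc2 (by omega) (by omega)).mp h4⟩
      · rintro ⟨h3, h4⟩
        exact ⟨h3, (h (k + 1) c d hc1 hc2 (by omega) (by omega)).mpr h4⟩

theorem compl_tt (A : ℕ → ℕ → ℤ) (R S : Finset ℕ) (k : ℕ) :
    ttEntry (reorient (reorient A (Finset.Icc 1 13 \ R)) S) 13 (k + 1) =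
      ttEntry (reorient (reorient A R) S) 13 (k + 1) := by
  have key : ∀ i c, 1 ≤ c → c ≤ 13 → reorient (reorient A (Finset.Icc 1 13 \ R)) S i c =
      - reorient (reorient A R) S i c := by
    intro i c h1 h2
    simp only [reorient, Finset.mem_sdiff, Finset.mem_Icc, h1, h2, true_and]
    by_cases h3 : c ∈ R <;> by_cases h4 : c ∈ S <;> simp [h3, h4]
  refine (tt_congr (by norm_num) ?_ k).1
  intro i c c' h1 h2 h3 h4
  rw [key i c h1 h2, key i c' h3 h4, ne_eq, neg_inj]

theorem reorient_empty (A : ℕ → ℕ → ℤ) : reorient A ∅ = A := by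
  funext i j
  simp [reorient]

theorem travel_normal {A : ℕ → ℕ → ℤ} {D : Finset ℕ} (h : IsNeighborlyTravel A 9 13 3 D) :
    ∃ R : Finset ℕ, (R ⊆ Finset.Icc 1 13 ∧ 1 ∉ R ∧ IsNeighborly (reorient A R) 9 13 3) ∧
      ttFollows (reorient A R) 13 D := by
  obtain ⟨R, hR, hF, hN⟩ := h
  by_cases h1 : 1 ∈ R
  · refine ⟨Finset.Icc 1 13 \ R, ⟨Finset.sdiff_subset, by simp [h1], ?_⟩, ?_⟩
    · intro S hS hcard hpos
      apply hN S hS hcard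
      unfold ttPositive at *
      rwa [compl_tt] at hpos
    · have e : ∀ k, ttEntry (reorient A (Finset.Icc 1 13 \ R)) 13 (k + 1) =
          ttEntry (reorient A R) 13 (k + 1) := by
        intro k
        have := compl_tt A R ∅ k
        rwa [reorient_empty, reorient_empty] at this
      refine ⟨by rw [e]; exact hF.1, ?_⟩
      intro c
      rw [hF.2 c]
      apply exists_congr
      intro i
      cases i with
      | zero => simp
      | succ i => rw [e]
  · exact ⟨R, ⟨hR, h1, hN⟩, hF⟩

theorem follows_iff {B : ℕ → ℕ → ℤ} {n : ℕ} {D : Finset ℕ} (h : ttFollows B n D) (c : ℕ) :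
    c ∈ D ↔ ∃ i, 2 ≤ i ∧ ttEntry B n i = some c := by
  have hnone : ∀ k, ttEntry B n (D.card + 2 + k) = none := by
    intro k
    induction k with
    | zero => exact h.1
    | succ k ih =>
      rw [show D.card + 2 + k = D.card + 1 + k + 1 by omega] at ih
      rw [show D.card + 2 + (k + 1) = D.card + 1 + k + 2 by omega, ttEntry, ih]
      rfl
  rw [h.2 c]
  constructor
  · rintro ⟨i, h1, _, h3⟩
    exact ⟨i, h1, h3⟩
  · rintro ⟨i, h1, h3⟩
    refine ⟨i, h1, ?_, h3⟩
    by_contra hi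
    have := hnone (i - (D.card + 2))
    rw [show D.card + 2 + (i - (D.card + 2)) = i by omega, h3] at this
    simp at this

def startIx (a b c : Bool) : Nat :=
  nth startL (cond a 4 0 + (cond b 2 0 + cond c 1 0))

theorem start_table (a b c : Bool) :
    startIx a b c < codes1.length ∧ yv (nth codes1 (startIx a b c)) 1 = false ∧
    yv (nth codes1 (startIx a b c)) 2 = xor b a ∧ yv (nth codes1 (startIx a b c)) 3 = xor c a ∧
    ∀ t, costB (xor t a) false ≤ mv (nth codes1 (startIx a b c)) 0 t ∧
      4 ≤ mv (nth codes1 (startIx a b c)) 1 t ∧ 4 ≤ mv (nth codes1 (startIx a b c)) 2 t ∧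
      4 ≤ mv (nth codes1 (startIx a b c)) 3 t := by
  revert a b c
  decide +kernel

theorem codeOK_start {A : ℕ → ℕ → ℤ} {R : Finset ℕ} {a b c : Bool} (h1 : 1 ∉ R)
    (ha : xx A R 1 2 = xor a (al A 1 1)) (hb : xx A R 1 3 = xor b (al A 1 1))
    (hc : xx A R 1 4 = xor c (al A 1 1)) :
    CodeOK A R 1 (xor (al A 1 1) a) (nth codes1 (startIx a b c)) := by
  obtain ⟨_, y1, y2, y3, hm⟩ := start_table a b c
  constructor
  · intro o ho ho'
    interval_cases o
    · rw [y1]; refine ha.trans ?_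
      cases a <;> cases al A 1 1 <;> rfl
    · rw [y2]; refine hb.trans ?_
      cases a <;> cases b <;> cases al A 1 1 <;> rfl
    · rw [y3]; refine hc.trans ?_
      cases a <;> cases c <;> cases al A 1 1 <;> rfl
  · intro o ho t
    obtain ⟨m0, m1, m2, m3⟩ := hm t
    interval_cases o
    · right
      refine (Reach.start A R _).mono (le_trans (le_of_eq ?_) m0)
      have : xx A R 1 1 = al A 1 1 := by simp [xx, h1]
      rw [this]
      cases t <;> cases a <;> cases al A 1 1 <;> rfl
    · exact Or.inl m1
    · exact Or.inl m2
    · exact Or.inl m3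

theorem card_le {A : ℕ → ℕ → ℤ} (hA : IsSignMatrix 9 13 A) (X : Finset (Finset ℕ))
    (hX : ∀ R ∈ X, R ⊆ Finset.Icc 1 13 ∧ 1 ∉ R ∧ IsNeighborly (reorient A R) 9 13 3) :
    X.card ≤ 79 := by
  let Y : Bool → Bool → Bool → Finset (Finset ℕ) := fun a b c =>
    X.filter fun R => xx A R 1 2 = xor a (al A 1 1) ∧ xx A R 1 3 = xor b (al A 1 1) ∧
      xx A R 1 4 = xor c (al A 1 1)
  have hY : ∀ a b c, (Y a b c).card ≤
      Nf (rows1 :: rows2 :: tabs3) (startIx a b c) (bitsL A 1 9) := by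
    intro a b c
    refine count_le hA (rows1 :: rows2 :: tabs3) codes1 1 (xor (al A 1 1) a) (startIx a b c) _
      chain_all le_rfl rfl (start_table a b c).1 ?_ ?_
    · intro R hR
      obtain ⟨hR, h2, h3, h4⟩ := Finset.mem_filter.mp hR
      obtain ⟨g1, g2, g3⟩ := hX R hR
      exact ⟨g1, g3, codeOK_start g2 h2 h3 h4⟩
    · intro R hR R' hR' j hj
      obtain ⟨hR, h2, h3, h4⟩ := Finset.mem_filter.mp hR
      obtain ⟨hR', h2', h3', h4'⟩ := Finset.mem_filter.mp hR'
      have e2 := h2.trans h2'.symm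
      have e3 := h3.trans h3'.symm
      have e4 := h4.trans h4'.symm
      simp only [xx, Bool.xor_right_inj, decide_eq_decide] at e2 e3 e4
      have z : ∀ Q ∈ X, 0 ∉ Q := by
        intro Q hQ h0
        have := Finset.mem_Icc.mp ((hX Q hQ).1 h0)
        omega
      interval_cases j
      · simp [z R hR, z R' hR']
      · simp [(hX R hR).2.1, (hX R' hR').2.1]
      · exact e2
      · exact e3
      · exact e4
  have hsub : X ⊆ (Finset.univ : Finset (Bool × Bool × Bool)).biUnion
      fun p => Y p.1 p.2.1 p.2.2 := by
    intro R hR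
    rw [Finset.mem_biUnion]
    refine ⟨(xor (xx A R 1 2) (al A 1 1), xor (xx A R 1 3) (al A 1 1), xor (xx A R 1 4) (al A 1 1)),
      Finset.mem_univ _, ?_⟩
    simp [Y, hR]
  have h1 := (Finset.card_le_card hsub).trans Finset.card_biUnion_le
  have h2 := main_count (bitsL A 1 9) rfl
  rw [Fintype.sum_prod_type] at h1
  simp only [Fintype.sum_prod_type, Fintype.sum_bool] at h1
  have e : sumN (rows1 :: rows2 :: tabs3) startL (bitsL A 1 9) =
      Nf (rows1 :: rows2 :: tabs3) (startIx false false false) (bitsL A 1 9) +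
      (Nf (rows1 :: rows2 :: tabs3) (startIx false false true) (bitsL A 1 9) +
      (Nf (rows1 :: rows2 :: tabs3) (startIx false true false) (bitsL A 1 9) +
      (Nf (rows1 :: rows2 :: tabs3) (startIx false true true) (bitsL A 1 9) +
      (Nf (rows1 :: rows2 :: tabs3) (startIx true false false) (bitsL A 1 9) +
      (Nf (rows1 :: rows2 :: tabs3) (startIx true false true) (bitsL A 1 9) +
      (Nf (rows1 :: rows2 :: tabs3) (startIx true true false) (bitsL A 1 9) +
      (Nf (rows1 :: rows2 :: tabs3) (startIx true true true) (bitsL A 1 9)))))))) := by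
    simp only [sumN, startL, startIx, nth, cond_true, cond_false, List.map_cons, List.map_nil,
      List.sum_cons, List.sum_nil, Nat.add_zero, Nat.reduceAdd, Nat.zero_add]
  have := hY false false false
  have := hY false false true
  have := hY false true false
  have := hY false true true
  have := hY true false false
  have := hY true false true
  have := hY true true false
  have := hY true true true
  omega

/-- Every 9×13 sign matrix has at most 79 3-neighborly plain travels. -/
theorem statement_17 (A : ℕ → ℕ → ℤ) (hA : IsSignMatrix 9 13 A) :
    {D : Finset ℕ | IsPlainTravel 9 13 D ∧ IsNeighborlyTravel A 9 13 3 D}.ncard ≤ 79 := by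
  classical
  let X : Finset (Finset ℕ) := (Finset.Icc 1 13).powerset.filter fun R =>
    1 ∉ R ∧ IsNeighborly (reorient A R) 9 13 3
  have hX : X.card ≤ 79 := by
    refine card_le hA X ?_
    intro R hR
    obtain ⟨h1, h2⟩ := Finset.mem_filter.mp hR
    exact ⟨Finset.mem_powerset.mp h1, h2⟩
  have hex : ∀ D : Finset ℕ, ∃ R : Finset ℕ,
      (IsPlainTravel 9 13 D ∧ IsNeighborlyTravel A 9 13 3 D) →
        R ∈ X ∧ ttFollows (reorient A R) 13 D := by
    intro D
    by_cases h : IsPlainTravel 9 13 D ∧ IsNeighborlyTravel A 9 13 3 D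
    · obtain ⟨R, ⟨h1, h2, h3⟩, h4⟩ := travel_normal h.2
      exact ⟨R, fun _ => ⟨Finset.mem_filter.mpr ⟨Finset.mem_powerset.mpr h1, h2, h3⟩, h4⟩⟩
    · exact ⟨∅, fun h' => absurd h' h⟩
  choose f hf using hex
  refine le_trans ?_ hX
  rw [← Set.ncard_coe_finset X]
  refine Set.ncard_le_ncard_of_injOn f (fun D hD => (hf D hD).1) ?_ X.finite_toSet
  intro D hD D' hD' he
  have h1 := (hf D hD).2
  have h2 := (hf D' hD').2
  rw [he] at h1
  ext c
  rw [follows_iff h1 c, follows_iff h2 c]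
end

section
/- For every integer n ≥ 11, every 7×n sign matrix has at most 1 + (n−1) + C(n−1, 2) 2-neighborly plain travels, where C denotes the binomial coefficient. (Equivalently, every rank 7 Lawrence oriented matroid on n ≥ 11 elements has at most c_7(n,2) = 2·∑_{i=0}^{2} C(n−1,i) 2-neighborly reorientations.) -/
namespace LawrenceDP

/-! ### The dynamic program

A tuple records the furthest rows reachable with at most `0, 1, 1, 2, 2` flipped columns,
the last column being unflipped / unflipped / flipped / unflipped / flipped. -/

structure Tup where
  a : ℕ
  b : ℕ
  b' : ℕ
  c : ℕ
  c' : ℕ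

def mv (s : ℕ) (x : Bool) : ℕ := cond x (s + 1) s

def mx (x y : ℕ) : ℕ := cond (Nat.ble x y) y x

theorem mx_eq (x y : ℕ) : mx x y = max x y := by
  unfold mx
  cases h : Nat.ble x y
  · have : ¬ x ≤ y := by intro h'; rw [Nat.ble_eq_true_of_le h'] at h; cases h
    simp only [cond_false]; omega
  · have := Nat.le_of_ble_eq_true h
    simp only [cond_true]; omega

/-- one step, given the bits telling whether row `s` changes sign here, for the five rows of the tuple -/
def stepB (t : Tup) (p q q' u u' y : Bool) : Tup where
  a := mv t.a (xor p y)
  b := mx (mv t.b (xor q y)) (mv t.b' (! xor q' y))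
  b' := mv t.a (! xor p y)
  c := mx (mv t.c (xor u y)) (mv t.c' (! xor u' y))
  c' := mx (mv t.b (! xor q y)) (mv t.b' (xor q' y))

def step (t : Tup) (e : ℕ → Bool) (y : Bool) : Tup :=
  stepB t (e t.a) (e t.b) (e t.b') (e t.c) (e t.c') y

def alive (r : ℕ) (t : Tup) : Bool :=
  Nat.ble t.a r && (Nat.ble t.b r && (Nat.ble t.b' r && (Nat.ble t.c r && Nat.ble t.c' r)))

theorem alive_iff (r : ℕ) (t : Tup) :
    alive r t = true ↔ t.a ≤ r ∧ t.b ≤ r ∧ t.b' ≤ r ∧ t.c ≤ r ∧ t.c' ≤ r := by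
  simp [alive, Nat.ble_eq]

/-- number of words surviving -/
def cnt (r : ℕ) : List (ℕ → Bool) → Tup → ℕ
  | [], t => cond (alive r t) 1 0
  | e :: ds, t => cnt r ds (step t e false) + cnt r ds (step t e true)

theorem cnt_le_pow (r : ℕ) (ds : List (ℕ → Bool)) : ∀ t, cnt r ds t ≤ 2 ^ ds.length := by
  induction ds with
  | nil => intro t; unfold cnt; cases alive r t <;> simp
  | cons e ds ih =>
    intro t
    have h1 := ih (step t e false)
    have h2 := ih (step t e true)
    simp only [cnt, List.length_cons, pow_succ]
    omega

theorem le_mv (s : ℕ) (x : Bool) : s ≤ mv s x := by cases x <;> simp [mv]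

theorem alive_of_step {r : ℕ} {t : Tup} {e : ℕ → Bool} {y : Bool}
    (h : alive r (step t e y) = true) : alive r t = true := by
  rw [alive_iff] at h ⊢
  simp only [step, stepB, mx_eq] at h
  have h1 := le_mv t.a (xor (e t.a) y)
  have h2 := le_mv t.b (xor (e t.b) y)
  have h3 := le_mv t.b' (! xor (e t.b') y)
  have h4 := le_mv t.c (xor (e t.c) y)
  have h5 := le_mv t.c' (! xor (e t.c') y)
  omega

theorem alive_both {r : ℕ} {t : Tup} {e : ℕ → Bool}
    (h0 : alive (r + 1) (step t e false) = true) (h1 : alive (r + 1) (step t e true) = true) :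
    alive r t = true := by
  rw [alive_iff] at h0 h1 ⊢
  simp only [step, stepB, mx_eq] at h0 h1
  obtain ⟨a1, a2, a3, a4, a5⟩ := h0
  obtain ⟨b1, b2, b3, b4, b5⟩ := h1
  refine ⟨?_, ?_, ?_, ?_, ?_⟩
  · cases h : e t.a <;> simp [h, mv] at a1 b1 <;> omega
  · cases h : e t.b <;> simp [h, mv] at a2 b2 <;> omega
  · cases h : e t.b' <;> simp [h, mv] at a2 b2 <;> omega
  · cases h : e t.c <;> simp [h, mv] at a4 b4 <;> omega
  · cases h : e t.c' <;> simp [h, mv] at a4 b4 <;> omega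

theorem cnt_dead (r : ℕ) (ds : List (ℕ → Bool)) :
    ∀ t, alive r t = false → cnt r ds t = 0 := by
  induction ds with
  | nil => intro t h; simp [cnt, h]
  | cons e ds ih =>
    intro t h
    have key : ∀ y, alive r (step t e y) = false := by
      intro y
      cases h' : alive r (step t e y)
      · rfl
      · rw [alive_of_step h'] at h; cases h
    simp [cnt, ih _ (key false), ih _ (key true)]

theorem cnt_append (r : ℕ) (e : ℕ → Bool) (ds : List (ℕ → Bool)) :
    ∀ t, cnt (r + 1) (ds ++ [e]) t ≤ cnt (r + 1) ds t + cnt r ds t := by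
  induction ds with
  | nil =>
    intro t
    simp only [List.nil_append, cnt]
    cases h0 : alive (r + 1) (step t e false) <;> cases h1 : alive (r + 1) (step t e true)
    · simp
    · simp [alive_of_step h1]
    · simp [alive_of_step h0]
    · simp [alive_of_step h0, alive_both h0 h1]
  | cons f ds ih =>
    intro t
    have h1 := ih (step t f false)
    have h2 := ih (step t f true)
    simp only [List.cons_append, cnt]
    omega

/-! ### Memoised evaluation -/

inductive Tr where
  | lf : Tr
  | nd : Tr → ℕ → ℕ → Tr → Tr

open Tr

def look : Tr → ℕ → ℕ
  | lf, _ => 1024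
  | nd l k v r, x => cond (Nat.beq x k) v (cond (Nat.ble x k) (look l x) (look r x))

def enc (t : Tup) : ℕ := (((t.a * 8 + t.b) * 8 + t.b') * 8 + t.c) * 8 + t.c'

def dec (k : ℕ) : Tup where
  a := k / 4096
  b := k / 512 % 8
  b' := k / 64 % 8
  c := k / 8 % 8
  c' := k % 8

theorem dec_enc (t : Tup) (h : alive 7 t = true) : dec (enc t) = t := by
  rw [alive_iff] at h
  obtain ⟨a, b, b', c, c'⟩ := t
  simp only [enc, dec, Tup.mk.injEq] at h ⊢
  refine ⟨?_, ?_, ?_, ?_, ?_⟩ <;> omega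

/-- evaluate the number before continuing -/
def force {α : Type} (n : ℕ) (f : ℕ → α) : α :=
  Nat.rec (motive := fun _ => α) (f 0) (fun m _ => f (Nat.succ m)) n

theorem force_eq {α : Type} (n : ℕ) (f : ℕ → α) : force n f = f n := by
  cases n <;> rfl

def mapT (g : ℕ → ℕ) : Tr → Tr
  | lf => lf
  | nd l k _ r => nd (mapT g l) k (g k) (mapT g r)

def mapC (g : ℕ → ℕ) : Tr → (Tr → ℕ) → ℕ
  | lf, f => f lf
  | nd l k _ r, f =>
    mapC g l fun l' => force (g k) fun v => mapC g r fun r' => f (nd l' k v r')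

theorem mapC_eq (g : ℕ → ℕ) (T : Tr) : ∀ f, mapC g T f = f (mapT g T) := by
  induction T with
  | lf => intro f; rfl
  | nd l k v r ihl ihr => intro f; simp [mapC, mapT, ihl, ihr, force_eq]

theorem look_mapT (g : ℕ → ℕ) (T : Tr) (x : ℕ) :
    look (mapT g T) x = 1024 ∨ look (mapT g T) x = g x := by
  induction T with
  | lf => left; rfl
  | nd l k v r ihl ihr =>
    simp only [mapT, look]
    cases h : Nat.beq x k
    · cases Nat.ble x k
      · exact ihr
      · exact ihl
    · have := Nat.eq_of_beq_eq_true h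
      subst this
      right; rfl

def val (r : ℕ) (T : Tr) (t : Tup) : ℕ := cond (alive r t) (look T (enc t)) 0

def valF (r : ℕ) (T : Tr) (t : Tup) : ℕ :=
  force t.a fun a => force t.b fun b => force t.b' fun b' => force t.c fun c =>
  force t.c' fun c' => cond (alive r ⟨a, b, b', c, c'⟩)
    (force (enc ⟨a, b, b', c, c'⟩) (look T)) 0

theorem valF_eq (r : ℕ) (T : Tr) (t : Tup) : valF r T t = val r T t := by
  simp [valF, force_eq, val]

def pair (r : ℕ) (T : Tr) (t : Tup) (p q q' u u' : Bool) : ℕ :=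
  valF r T (stepB t p q q' u u' false) + valF r T (stepB t p q q' u u' true)

theorem stepB_not (t : Tup) (p q q' u u' y : Bool) :
    stepB t (!p) (!q) (!q') (!u) (!u') y = stepB t p q q' u u' (!y) := by
  simp [stepB]

theorem pair_not (r : ℕ) (T : Tr) (t : Tup) (p q q' u u' : Bool) :
    pair r T t (!p) (!q) (!q') (!u) (!u') = pair r T t p q q' u u' := by
  simp only [pair, stepB_not, Bool.not_false, Bool.not_true]
  exact Nat.add_comm _ _

def ch (o : Option Bool) (f : Bool → ℕ) : ℕ :=
  Option.casesOn (motive := fun _ => ℕ) o (mx (f false) (f true)) f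

theorem le_ch (o : Option Bool) (f : Bool → ℕ) (x : Bool) (h : ∀ z, o = some z → z = x) :
    f x ≤ ch o f := by
  cases o with
  | none => simp only [ch, mx_eq]; cases x <;> simp
  | some z => rw [h z rfl]; simp [ch]

def best (r : ℕ) (T : Tr) (t : Tup) : ℕ :=
  ch (some false) fun p =>
  ch (cond (Nat.beq t.b t.a) (some p) none) fun q =>
  ch (cond (Nat.beq t.b' t.a) (some p) (cond (Nat.beq t.b' t.b) (some q) none)) fun q' =>
  ch (cond (Nat.beq t.c t.a) (some p) (cond (Nat.beq t.c t.b) (some q)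
    (cond (Nat.beq t.c t.b') (some q') none))) fun u =>
  ch (cond (Nat.beq t.c' t.a) (some p) (cond (Nat.beq t.c' t.b) (some q)
    (cond (Nat.beq t.c' t.b') (some q') (cond (Nat.beq t.c' t.c) (some u) none)))) fun u' =>
  pair r T t p q q' u u'

theorem cond_some (e : ℕ → Bool) (x y : ℕ) (o : Option Bool)
    (h : ∀ z, o = some z → z = e x) :
    ∀ z, cond (Nat.beq x y) (some (e y)) o = some z → z = e x := by
  cases hxy : Nat.beq x y
  · exact h
  · have := Nat.eq_of_beq_eq_true hxy
    subst this
    intro z hz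
    simpa using hz.symm

theorem cond_none (e : ℕ → Bool) (x : ℕ) : ∀ z, (none : Option Bool) = some z → z = e x := by
  intro z hz; cases hz

theorem le_best_aux (r : ℕ) (T : Tr) (t : Tup) (e : ℕ → Bool) (he : e t.a = false) :
    pair r T t (e t.a) (e t.b) (e t.b') (e t.c) (e t.c') ≤ best r T t := by
  unfold best
  refine le_trans ?_ (le_ch _ _ (e t.a) (by rw [he]; simp))
  refine le_trans ?_ (le_ch _ _ (e t.b) (cond_some e _ _ _ (cond_none _ _)))
  refine le_trans ?_ (le_ch _ _ (e t.b')
    (cond_some e _ _ _ (cond_some e _ _ _ (cond_none _ _))))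
  refine le_trans ?_ (le_ch _ _ (e t.c)
    (cond_some e _ _ _ (cond_some e _ _ _ (cond_some e _ _ _ (cond_none _ _)))))
  exact (le_ch _ _ (e t.c')
    (cond_some e _ _ _ (cond_some e _ _ _ (cond_some e _ _ _
      (cond_some e _ _ _ (cond_none _ _))))))

theorem le_best (r : ℕ) (T : Tr) (t : Tup) (e : ℕ → Bool) :
    pair r T t (e t.a) (e t.b) (e t.b') (e t.c) (e t.c') ≤ best r T t := by
  cases he : e t.a
  · have := le_best_aux r T t e he
    rwa [he] at this
  · have := le_best_aux r T t (fun s => ! e s) (by simp [he])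
    rw [pair_not] at this
    rwa [he] at this

def bestK (r : ℕ) (T : Tr) (k : ℕ) : ℕ :=
  force (k / 4096) fun a => force (k / 512 % 8) fun b => force (k / 64 % 8) fun b' =>
  force (k / 8 % 8) fun c => force (k % 8) fun c' =>
  cond (alive r ⟨a, b, b', c, c'⟩) (best r T ⟨a, b, b', c, c'⟩) 0

theorem bestK_eq (r : ℕ) (T : Tr) (k : ℕ) (h : alive r (dec k) = true) :
    bestK r T k = best r T (dec k) := by
  simp only [dec] at h
  simp [bestK, force_eq, dec, h]

def iter (r : ℕ) : ℕ → Tr → (Tr → ℕ) → ℕ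
  | 0, T, f => f T
  | n + 1, T, f => mapC (bestK r T) T fun T' => iter r n T' f

def one : Tup := ⟨1, 1, 1, 1, 1⟩

def Good (r k : ℕ) (T : Tr) : Prop :=
  ∀ (ds : List (ℕ → Bool)), ds.length = k → ∀ t, cnt r ds t ≤ val r T t

theorem Good.next {r k : ℕ} {T : Tr} (hr : r ≤ 7) (hk : k + 1 ≤ 10) (h : Good r k T) :
    Good r (k + 1) (mapT (bestK r T) T) := by
  intro ds hds t
  cases ht : alive r t
  · rw [cnt_dead r ds t ht]; exact Nat.zero_le _
  have ht7 : alive 7 t = true := by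
    rw [alive_iff] at ht ⊢; omega
  simp only [val, ht, cond_true]
  rcases look_mapT (bestK r T) T (enc t) with h1 | h1
  · rw [h1]
    refine le_trans (cnt_le_pow r ds t) ?_
    rw [hds]
    exact le_trans (Nat.pow_le_pow_right (by norm_num) hk) (by norm_num)
  · rw [h1, bestK_eq r T _ (by rw [dec_enc t ht7]; exact ht), dec_enc t ht7]
    cases ds with
    | nil => simp at hds
    | cons e ds =>
      have hl : ds.length = k := by simpa using hds
      refine le_trans ?_ (le_best r T t e)
      simp only [pair, valF_eq]
      exact Nat.add_le_add (h ds hl _) (h ds hl _)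

theorem iter_sound (r : ℕ) (hr : r ≤ 7) (f : Tr → ℕ) : ∀ (m k : ℕ) (T : Tr), k + m ≤ 10 →
    Good r k T → ∃ T', Good r (k + m) T' ∧ iter r m T f = f T' := by
  intro m
  induction m with
  | zero => intro k T _ h; exact ⟨T, h, rfl⟩
  | succ m ih =>
    intro k T hk h
    obtain ⟨T', h1, h2⟩ := ih (k + 1) _ (by omega) (h.next hr (by omega))
    refine ⟨T', ?_, ?_⟩
    · have : k + 1 + m = k + (m + 1) := by omega
      rwa [this] at h1
    · simp only [iter, mapC_eq]; exact h2

/-- the tuples that occur, as a search tree -/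
def tree : Tr :=
  (nd (nd (nd (nd (nd (nd (nd (nd lf 4681 1 lf) 5266 1 (nd lf 5787 1 lf)) 5796 1 (nd (nd lf 5804 
  1 lf) 5812 1 lf)) 5820 1 (nd (nd (nd lf 6307 1 lf) 6309 1 lf) 6315 1 (nd (nd lf 6317 1 lf) 
  6323 1 lf))) 6325 1 (nd (nd (nd (nd lf 6331 1 lf) 6333 1 lf) 6828 1 (nd (nd lf 6830 1 lf) 6836 
  1 lf)) 6838 1 (nd (nd (nd lf 6844 1 lf) 6846 1 lf) 7349 1 (nd (nd lf 7351 1 lf) 7357 1 lf)))) 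
  7359 1 (nd (nd (nd (nd (nd lf 7870 1 lf) 9298 1 lf) 9435 1 (nd (nd lf 9819 1 lf) 9828 1 lf)) 
  9836 1 (nd (nd (nd lf 9844 1 lf) 9852 1 lf) 9956 1 (nd (nd lf 9964 1 lf) 9972 1 lf))) 9980 1 
  (nd (nd (nd (nd lf 10339 1 lf) 10341 1 lf) 10347 1 (nd (nd lf 10349 1 lf) 10355 1 lf)) 10357 1 
  (nd (nd (nd lf 10363 1 lf) 10365 1 lf) 10467 1 (nd (nd lf 10469 1 lf) 10475 1 lf))))) 10476 1 
  (nd (nd (nd (nd (nd (nd lf 10477 1 lf) 10483 1 lf) 10484 1 (nd (nd lf 10485 1 lf) 10491 1 lf)) 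
  10492 1 (nd (nd (nd lf 10493 1 lf) 10860 1 lf) 10862 1 (nd (nd lf 10868 1 lf) 10870 1 lf))) 
  10876 1 (nd (nd (nd (nd lf 10878 1 lf) 10988 1 lf) 10990 1 (nd (nd lf 10996 1 lf) 10998 1 lf)) 
  11004 1 (nd (nd (nd lf 11006 1 lf) 11381 1 lf) 11383 1 (nd (nd lf 11389 1 lf) 11391 1 lf)))) 
  11509 1 (nd (nd (nd (nd (nd lf 11511 1 lf) 11517 1 lf) 11519 1 (nd (nd lf 11902 1 lf) 12030 1 
  lf)) 13978 1 (nd (nd (nd lf 13988 1 lf) 13996 1 lf) 14004 1 (nd (nd lf 14012 1 lf) 14108 1 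
  lf))) 14124 1 (nd (nd (nd (nd lf 14132 1 lf) 14140 1 lf) 14499 1 (nd (nd lf 14501 1 lf) 14507 
  1 lf)) 14508 1 (nd (nd (nd lf 14509 1 lf) 14515 1 lf) 14516 1 (nd (nd lf 14517 1 lf) 14523 1 
  lf)))))) 14524 1 (nd (nd (nd (nd (nd (nd (nd lf 14525 1 lf) 14629 1 lf) 14637 1 (nd (nd lf 
  14645 1 lf) 14653 1 lf)) 15020 1 (nd (nd (nd lf 15022 1 lf) 15028 1 lf) 15030 1 (nd (nd lf 
  15036 1 lf) 15038 1 lf))) 15148 1 (nd (nd (nd (nd lf 15149 1 lf) 15150 1 lf) 15156 1 (nd (nd 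
  lf 15157 1 lf) 15158 1 lf)) 15164 1 (nd (nd (nd lf 15165 1 lf) 15166 1 lf) 15541 1 (nd (nd lf 
  15543 1 lf) 15549 1 lf)))) 15551 1 (nd (nd (nd (nd (nd lf 15669 1 lf) 15671 1 lf) 15677 1 (nd 
  (nd lf 15679 1 lf) 16062 1 lf)) 16190 1 (nd (nd (nd lf 18659 1 lf) 18661 1 lf) 18667 1 (nd (nd 
  lf 18669 1 lf) 18675 1 lf))) 18677 1 (nd (nd (nd (nd lf 18683 1 lf) 18685 1 lf) 18789 1 (nd 
  (nd lf 18797 1 lf) 18805 1 lf)) 18813 1 (nd (nd (nd lf 19180 1 lf) 19181 1 lf) 19182 1 (nd (nd 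
  lf 19188 1 lf) 19189 1 lf))))) 19190 1 (nd (nd (nd (nd (nd (nd lf 19196 1 lf) 19197 1 lf) 
  19198 1 (nd (nd lf 19310 1 lf) 19318 1 lf)) 19326 1 (nd (nd (nd lf 19701 1 lf) 19703 1 lf) 
  19709 1 (nd (nd lf 19711 1 lf) 19829 1 lf))) 19830 1 (nd (nd (nd (nd lf 19831 1 lf) 19837 1 
  lf) 19838 1 (nd (nd lf 19839 1 lf) 20222 1 lf)) 20350 1 (nd (nd (nd lf 23340 1 lf) 23342 1 lf) 
  23348 1 (nd (nd lf 23350 1 lf) 23356 1 lf)))) 23358 1 (nd (nd (nd (nd (nd lf 23470 1 lf) 23478 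
  1 lf) 23486 1 (nd (nd lf 23861 1 lf) 23862 1 lf)) 23863 1 (nd (nd (nd lf 23869 1 lf) 23870 1 
  lf) 23871 1 (nd (nd lf 23991 1 lf) 23999 1 lf))) 24382 1 (nd (nd (nd (nd lf 24510 1 lf) 24511 
  1 lf) 28021 1 (nd (nd lf 28023 1 lf) 28029 1 lf)) 28031 1 (nd (nd (nd lf 28151 1 lf) 28159 1 
  lf) 28542 1 (nd (nd lf 28543 1 lf) 32702 1 lf)))))))

def allPos : Tr → Bool
  | lf => true
  | nd l _ v r => Nat.ble 1 v && (allPos l && allPos r)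

theorem look_pos (T : Tr) (h : allPos T = true) (x : ℕ) : 1 ≤ look T x := by
  induction T with
  | lf => simp [look]
  | nd l k v r ihl ihr =>
    simp only [allPos, Bool.and_eq_true] at h
    simp only [look]
    cases Nat.beq x k
    · cases Nat.ble x k
      · exact ihr h.2.2
      · exact ihl h.2.1
    · exact Nat.le_of_ble_eq_true h.1

theorem allPos_tree : allPos tree = true := by decide +kernel

theorem good_zero (r : ℕ) : Good r 0 tree := by
  intro ds hds t
  cases ds with
  | cons e ds => simp at hds
  | nil =>
    simp only [cnt, val]
    cases alive r t
    · simp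
    · simpa using look_pos tree allPos_tree (enc t)

def dp (r m : ℕ) : ℕ := iter r m tree fun T => look T (enc one)

theorem base_bound (r m v : ℕ) (hr : r ≤ 7) (hm : m ≤ 10)
    (h : dp r m ≤ v)
    (ds : List (ℕ → Bool)) (hds : ds.length = m) : cnt r ds one ≤ v := by
  obtain ⟨T', h1, h2⟩ := iter_sound r hr (fun T => look T (enc one)) m 0 tree (by omega)
    (good_zero r)
  rw [Nat.zero_add] at h1
  have h3 := h1 ds hds one
  have h4 := h
  unfold dp at h4
  rw [h2] at h4
  refine le_trans h3 (le_trans ?_ h4)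
  simp only [val]
  cases alive r one <;> simp

theorem base4 : dp 4 4 ≤ 0 := by decide +kernel
theorem base5 : dp 5 6 ≤ 1 := by decide +kernel
theorem base6 : dp 6 8 ≤ 9 := by decide +kernel
theorem base7 : dp 7 10 ≤ 56 := by decide +kernel

theorem cnt_mono (r : ℕ) (ds : List (ℕ → Bool)) : ∀ t, cnt r ds t ≤ cnt (r + 1) ds t := by
  induction ds with
  | nil =>
    intro t
    simp only [cnt]
    cases h : alive r t
    · simp
    · have : alive (r + 1) t = true := by rw [alive_iff] at h ⊢; omega
      simp [this]
  | cons e ds ih =>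
    intro t
    exact Nat.add_le_add (ih _) (ih _)

theorem bound4 (ds : List (ℕ → Bool)) (h : 4 ≤ ds.length) : cnt 4 ds one ≤ 0 := by
  induction ds using List.reverseRecOn with
  | nil => simp at h
  | append_singleton ds e ih =>
    rcases Nat.lt_or_ge ds.length 4 with h' | h'
    · exact base_bound 4 4 0 (by norm_num) (by norm_num) base4 _ (by simp at h ⊢; omega)
    · have h1 := ih h'
      have h2 := cnt_append 3 e ds one
      have h3 := cnt_mono 3 ds one
      norm_num at h1 h2 h3 ⊢
      omega

theorem bound5 (ds : List (ℕ → Bool)) (h : 6 ≤ ds.length) : cnt 5 ds one ≤ 1 := by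
  induction ds using List.reverseRecOn with
  | nil => simp at h
  | append_singleton ds e ih =>
    rcases Nat.lt_or_ge ds.length 6 with h' | h'
    · exact base_bound 5 6 1 (by norm_num) (by norm_num) base5 _ (by simp at h ⊢; omega)
    · have h1 := ih h'
      have h2 := cnt_append 4 e ds one
      have h3 := bound4 ds (by omega)
      norm_num at h1 h2 h3 ⊢
      omega

theorem bound6 (ds : List (ℕ → Bool)) (h : 8 ≤ ds.length) : cnt 6 ds one ≤ 1 + ds.length := by
  induction ds using List.reverseRecOn with
  | nil => simp at h
  | append_singleton ds e ih =>
    rcases Nat.lt_or_ge ds.length 8 with h' | h'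
    · have hl : (ds ++ [e]).length = 8 := by simp at h ⊢; omega
      rw [hl]
      exact base_bound 6 8 9 (by norm_num) (by norm_num) base6 _ hl
    · have h1 := ih h'
      have h2 := cnt_append 5 e ds one
      have h3 := bound5 ds (by omega)
      norm_num at h1 h2 h3 ⊢
      omega

theorem bound7 (ds : List (ℕ → Bool)) (h : 10 ≤ ds.length) :
    cnt 7 ds one ≤ 1 + ds.length + ds.length.choose 2 := by
  induction ds using List.reverseRecOn with
  | nil => simp at h
  | append_singleton ds e ih =>
    rcases Nat.lt_or_ge ds.length 10 with h' | h'
    · have hl : (ds ++ [e]).length = 10 := by simp at h ⊢; omega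
      rw [hl]
      exact base_bound 7 10 56 (by norm_num) (by norm_num) base7 _ hl
    · have h1 := ih h'
      have h2 := cnt_append 6 e ds one
      have h3 := bound6 ds (by omega)
      have h4 : (ds.length + 1).choose 2 = ds.length + ds.length.choose 2 := by
        rw [Nat.choose_succ_succ' ds.length 1, Nat.choose_one_right]
      rw [List.length_append, List.length_singleton, h4]
      norm_num at h2
      omega

end LawrenceDP

namespace LawrenceDP

/-! ### Words -/

def words (r : ℕ) : List (ℕ → Bool) → Tup → Finset (List Bool)
  | [], t => if alive r t = true then {[]} else ∅
  | e :: ds, t => (words r ds (step t e false)).image (List.cons false) ∪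
      (words r ds (step t e true)).image (List.cons true)

theorem card_words (r : ℕ) (ds : List (ℕ → Bool)) :
    ∀ t, (words r ds t).card ≤ cnt r ds t := by
  induction ds with
  | nil => intro t; simp only [words, cnt]; cases alive r t <;> simp
  | cons e ds ih =>
    intro t
    simp only [words, cnt]
    refine le_trans (Finset.card_union_le _ _) (Nat.add_le_add ?_ ?_)
    · exact le_trans Finset.card_image_le (ih _)
    · exact le_trans Finset.card_image_le (ih _)

theorem mem_words (r : ℕ) (L : List ((ℕ → Bool) × Bool)) :
    ∀ t, alive r (L.foldl (fun t p => step t p.1 p.2) t) = true →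
      L.map Prod.snd ∈ words r (L.map Prod.fst) t := by
  induction L with
  | nil => intro t h; simp only [List.foldl_nil] at h; simp [words, h]
  | cons p L ih =>
    intro t h
    obtain ⟨e, y⟩ := p
    have := ih (step t e y) h
    simp only [List.map_cons, words, Finset.mem_union, Finset.mem_image]
    cases y
    · left; exact ⟨_, this, rfl⟩
    · right; exact ⟨_, this, rfl⟩

/-! ### The automaton of a matrix -/

/-- row of the travel at column `k + 1` -/
def st (B : ℕ → ℕ → ℤ) : ℕ → ℕ
  | 0 => 1
  | k + 1 => if B (st B k) (k + 1) ≠ B (st B k) (k + 2) then st B k + 1 else st B k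

theorem one_le_st (B : ℕ → ℕ → ℤ) (k : ℕ) : 1 ≤ st B k := by
  induction k with
  | zero => simp [st]
  | succ k ih => simp only [st]; split_ifs <;> omega

theorem rowChange_some {B : ℕ → ℕ → ℤ} {n i c c' : ℕ} (h : rowChange B n i c = some c') :
    c < c' ∧ c' ≤ n ∧ B i c' ≠ B i c ∧ ∀ x, c < x → x < c' → B i x = B i c := by
  unfold rowChange at h
  rw [List.find?_range_eq_some] at h
  obtain ⟨h1, h2, h3⟩ := h
  simp only [decide_eq_true_eq, List.mem_range] at h1 h2
  refine ⟨h1.1, by omega, h1.2, ?_⟩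
  intro x hx hx'
  have := h3 x hx'
  simp only [Bool.not_eq_true', decide_eq_false_iff_not, not_and, not_not] at this
  exact this hx

theorem rowChange_none {B : ℕ → ℕ → ℤ} {n i c : ℕ} (h : rowChange B n i c = none) :
    ∀ x, c < x → x ≤ n → B i x = B i c := by
  unfold rowChange at h
  rw [List.find?_eq_none] at h
  intro x hx hx'
  have := h x (by simp; omega)
  simp only [decide_eq_true_eq, not_and, not_not] at this
  exact this hx

theorem st_const {B : ℕ → ℕ → ℤ} {i k : ℕ} (m : ℕ) (h0 : st B k = i)
    (h : ∀ x, k < x → x ≤ k + m → B i (x + 1) = B i (k + 1)) : st B (k + m) = i := by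
  induction m with
  | zero => exact h0
  | succ m ih =>
    have h1 := ih (fun x hx hx' => h x hx (by omega))
    have h2 : B i (k + m + 1) = B i (k + 1) := by
      rcases Nat.eq_zero_or_pos m with hm | hm
      · subst hm; rfl
      · exact h (k + m) (by omega) (by omega)
    have h3 : B i (k + m + 2) = B i (k + 1) := h (k + m + 1) (by omega) (by omega)
    rw [← Nat.add_assoc]
    simp only [st, h1, h2, h3]
    simp

theorem entry_st {B : ℕ → ℕ → ℤ} {n : ℕ} (hn : 1 ≤ n) (i : ℕ) :
    ∀ c, ttEntry B n (i + 1) = some c → 1 ≤ c ∧ c ≤ n ∧ st B (c - 1) = i + 1 := by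
  induction i with
  | zero =>
    intro c h
    simp only [ttEntry, Option.some.injEq] at h
    subst h
    exact ⟨le_refl _, hn, rfl⟩
  | succ i ih =>
    intro c' h
    simp only [ttEntry] at h
    rw [Option.bind_eq_some_iff] at h
    obtain ⟨c, hc, h⟩ := h
    obtain ⟨h1, h2, h3⟩ := ih c hc
    obtain ⟨g1, g2, g3, g4⟩ := rowChange_some h
    refine ⟨by omega, g2, ?_⟩
    obtain ⟨k, rfl⟩ : ∃ k, c = k + 1 := ⟨c - 1, by omega⟩
    obtain ⟨m, rfl⟩ : ∃ m, c' = k + m + 2 := ⟨c' - k - 2, by omega⟩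
    have h4 : st B (k + m) = i + 1 :=
      st_const m h3 (fun x hx hx' => g4 (x + 1) (by omega) (by omega))
    have h5 : B (i + 1) (k + m + 1) = B (i + 1) (k + 1) := by
      rcases Nat.eq_zero_or_pos m with hm | hm
      · subst hm; rfl
      · exact g4 (k + m + 1) (by omega) (by omega)
    have : k + m + 2 - 1 = (k + m) + 1 := by omega
    rw [this]
    simp only [st, h4]
    rw [if_pos]
    rw [h5]
    exact fun h' => g3 h'.symm

theorem last_st {B : ℕ → ℕ → ℤ} {n : ℕ} (hn : 1 ≤ n) {i c : ℕ}
    (h : ttEntry B n (i + 1) = some c) (h' : ttEntry B n (i + 2) = none) :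
    st B (n - 1) = i + 1 := by
  obtain ⟨h1, h2, h3⟩ := entry_st hn i c h
  simp only [ttEntry, h, Option.bind_some] at h'
  have h4 := rowChange_none h'
  obtain ⟨k, rfl⟩ : ∃ k, c = k + 1 := ⟨c - 1, by omega⟩
  obtain ⟨m, rfl⟩ : ∃ m, n = k + m + 1 := ⟨n - k - 1, by omega⟩
  exact st_const m h3 (fun x hx hx' => h4 (x + 1) (by omega) (by omega))

theorem st_le_of_none {B : ℕ → ℕ → ℤ} {n : ℕ} (hn : 1 ≤ n) (i : ℕ)
    (h : ttEntry B n (i + 2) = none) : st B (n - 1) ≤ i + 1 := by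
  induction i with
  | zero => exact le_of_eq (last_st hn (c := 1) rfl h)
  | succ i ih =>
    cases hc : ttEntry B n (i + 2) with
    | none => have := ih hc; omega
    | some c => exact le_of_eq (last_st hn hc h)

theorem st_le_of_not_pos {B : ℕ → ℕ → ℤ} {n : ℕ} (hn : 1 ≤ n) (h : ¬ ttPositive B 7 n) :
    st B (n - 1) ≤ 7 := by
  apply st_le_of_none hn 6
  unfold ttPositive at h
  simpa using h

/-! ### Flips -/

def chg (B : ℕ → ℕ → ℤ) (s k : ℕ) : Bool := decide (B s (k + 1) ≠ B s (k + 2))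

def yy (R : Finset ℕ) (k : ℕ) : Bool := xor (decide (k + 1 ∈ R)) (decide (k + 2 ∈ R))

theorem st_succ (B : ℕ → ℕ → ℤ) (k : ℕ) : st B (k + 1) = mv (st B k) (chg B (st B k) k) := by
  simp only [st, chg, mv]
  split_ifs with h <;> simp [h]

theorem chg_reorient {n : ℕ} {B : ℕ → ℕ → ℤ} (hB : IsSignMatrix 7 n B) (S : Finset ℕ) {s k : ℕ}
    (h1 : 1 ≤ s) (h7 : s ≤ 7) (hk : k + 2 ≤ n) :
    chg (reorient B S) s k = xor (chg B s k) (yy S k) := by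
  have e1 := hB s (k + 1) h1 h7 (by omega) (by omega)
  have e2 := hB s (k + 2) h1 h7 (by omega) (by omega)
  unfold chg yy reorient
  by_cases m1 : k + 1 ∈ S <;> by_cases m2 : k + 2 ∈ S <;>
    rcases e1 with e1 | e1 <;> rcases e2 with e2 | e2 <;> simp [m1, m2, e1, e2]

theorem sign_reorient {n : ℕ} {B : ℕ → ℕ → ℤ} (hB : IsSignMatrix 7 n B) (S : Finset ℕ) :
    IsSignMatrix 7 n (reorient B S) := by
  intro i j h1 h2 h3 h4
  unfold reorient
  rcases hB i j h1 h2 h3 h4 with h | h <;> split_ifs <;> simp [h]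

theorem st_congr {B : ℕ → ℕ → ℤ} {S S' : Finset ℕ} (k : ℕ)
    (h : ∀ x, x ≤ k + 1 → (x ∈ S ↔ x ∈ S')) :
    st (reorient B S) k = st (reorient B S') k := by
  induction k with
  | zero => rfl
  | succ k ih =>
    have h1 := ih (fun x hx => h x (by omega))
    have h2 := h (k + 1) (by omega)
    have h3 := h (k + 2) (by omega)
    have r1 : ∀ i, reorient B S i (k + 1) = reorient B S' i (k + 1) := by
      intro i; simp [reorient, h2]
    have r2 : ∀ i, reorient B S i (k + 2) = reorient B S' i (k + 2) := by
      intro i; simp [reorient, h3]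
    simp only [st, h1, r1, r2]

def Ach (B : ℕ → ℕ → ℤ) (k u : ℕ) (b : Bool) (s : ℕ) : Prop :=
  ∃ S : Finset ℕ, S ⊆ Finset.Icc 1 (k + 1) ∧ S.card ≤ u ∧ decide (k + 1 ∈ S) = b ∧
    (s ≤ st (reorient B S) k ∨ 8 ≤ st (reorient B S) k)

theorem Ach.next {n : ℕ} {B : ℕ → ℕ → ℤ} (hB : IsSignMatrix 7 n B) {k u u' s : ℕ} {b : Bool}
    (h : Ach B k u b s) (hk : k + 2 ≤ n) (b' β : Bool) (hu : u + b'.toNat ≤ u')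
    (hβ : 1 ≤ s → s ≤ 7 → β = xor (chg B s k) (xor b b')) :
    Ach B (k + 1) u' b' (mv s β) := by
  obtain ⟨S, hS, hc, hb, hs⟩ := h
  have hnot : k + 2 ∉ S := by
    intro h'
    have := Finset.mem_Icc.1 (hS h')
    omega
  obtain ⟨S', hS', hc', hb', hag⟩ : ∃ S' : Finset ℕ, S' ⊆ Finset.Icc 1 (k + 1 + 1) ∧
      S'.card ≤ u' ∧ decide (k + 2 ∈ S') = b' ∧ ∀ x, x ≤ k + 1 → (x ∈ S ↔ x ∈ S') := by
    have hsub : S ⊆ Finset.Icc 1 (k + 1 + 1) := by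
      intro x hx
      have := Finset.mem_Icc.1 (hS hx)
      exact Finset.mem_Icc.2 (by omega)
    cases b'
    · exact ⟨S, hsub, by simp at hu; omega, by simp [hnot], fun _ _ => Iff.rfl⟩
    · refine ⟨insert (k + 2) S, ?_, ?_, by simp, ?_⟩
      · exact Finset.insert_subset (Finset.mem_Icc.2 (by omega)) hsub
      · rw [Finset.card_insert_of_notMem hnot]; simp at hu; omega
      · intro x hx
        rw [Finset.mem_insert]
        constructor
        · exact Or.inr
        · rintro (h | h)
          · omega
          · exact h
  refine ⟨S', hS', hc', hb', ?_⟩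
  have hst := st_congr (B := B) k hag
  rw [hst] at hs
  rw [st_succ]
  have hyy : yy S' k = xor b b' := by
    unfold yy
    rw [hb', ← hb]
    simp [hag (k + 1) (le_refl _)]
  have hle := le_mv (st (reorient B S') k) (chg (reorient B S') (st (reorient B S') k) k)
  have h1 := one_le_st (reorient B S') k
  rcases Nat.lt_or_ge (st (reorient B S') k) 8 with hlt | hge
  · left
    have hs' : s ≤ st (reorient B S') k := by omega
    rcases Nat.lt_or_ge s (st (reorient B S') k) with hl | hg
    · refine le_trans ?_ hle
      cases β <;> simp [mv] <;> omega
    · have heq : s = st (reorient B S') k := by omega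
      rw [← heq, chg_reorient hB S' (by omega) (by omega) hk, hyy,
        hβ (by omega) (by omega)]
  · right; omega

theorem Ach.max {B : ℕ → ℕ → ℤ} {k u s s' : ℕ} {b : Bool} (h : Ach B k u b s)
    (h' : Ach B k u b s') : Ach B k u b (mx s s') := by
  unfold mx
  cases Nat.ble s s'
  · exact h
  · exact h'

def tup (A : ℕ → ℕ → ℤ) (R : Finset ℕ) : ℕ → Tup
  | 0 => one
  | k + 1 => step (tup A R k) (fun s => chg A s k) (yy R k)

theorem ach_tup {n : ℕ} {A : ℕ → ℕ → ℤ} (hA : IsSignMatrix 7 n A) (R : Finset ℕ) (k : ℕ)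
    (hk : k + 1 ≤ n) :
    Ach (reorient A R) k 0 false (tup A R k).a ∧ Ach (reorient A R) k 1 false (tup A R k).b ∧
    Ach (reorient A R) k 1 true (tup A R k).b' ∧ Ach (reorient A R) k 2 false (tup A R k).c ∧
    Ach (reorient A R) k 2 true (tup A R k).c' := by
  induction k with
  | zero =>
    have h0 : ∀ u, Ach (reorient A R) 0 u false 1 := fun u => ⟨∅, by simp, by simp, by simp, by
      left; simp [st]⟩
    have h1 : ∀ u, 1 ≤ u → Ach (reorient A R) 0 u true 1 := fun u hu =>
      ⟨{1}, by simp, by simpa using hu, by simp, by left; simp [st]⟩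
    exact ⟨h0 _, h0 _, h1 _ (by norm_num), h0 _, h1 _ (by norm_num)⟩
  | succ k ih =>
    obtain ⟨ha, hb, hb', hc, hc'⟩ := ih (by omega)
    have hB := sign_reorient hA R
    have hk' : k + 2 ≤ n := by omega
    have key : ∀ s, 1 ≤ s → s ≤ 7 → chg (reorient A R) s k = xor (chg A s k) (yy R k) :=
      fun s h1 h2 => chg_reorient hA R h1 h2 hk'
    simp only [tup, step, stepB]
    refine ⟨?_, Ach.max ?_ ?_, ?_, Ach.max ?_ ?_, Ach.max ?_ ?_⟩
    · exact ha.next hB hk' false _ (by simp) (fun h1 h2 => by simp [key _ h1 h2])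
    · exact hb.next hB hk' false _ (by simp) (fun h1 h2 => by simp [key _ h1 h2])
    · exact hb'.next hB hk' false _ (by simp) (fun h1 h2 => by simp [key _ h1 h2])
    · exact ha.next hB hk' true _ (by simp) (fun h1 h2 => by simp [key _ h1 h2])
    · exact hc.next hB hk' false _ (by simp) (fun h1 h2 => by simp [key _ h1 h2])
    · exact hc'.next hB hk' false _ (by simp) (fun h1 h2 => by simp [key _ h1 h2])
    · exact hb.next hB hk' true _ (by simp) (fun h1 h2 => by simp [key _ h1 h2])
    · exact hb'.next hB hk' true _ (by simp) (fun h1 h2 => by simp [key _ h1 h2])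

theorem Ach.le {n : ℕ} {B : ℕ → ℕ → ℤ} (hn : 1 ≤ n) (hN : IsNeighborly B 7 n 2) {u s : ℕ}
    {b : Bool} (hu : u ≤ 2) (h : Ach B (n - 1) u b s) : s ≤ 7 := by
  obtain ⟨S, hS, hc, -, hs⟩ := h
  have h1 : n - 1 + 1 = n := by omega
  rw [h1] at hS
  have := st_le_of_not_pos hn (hN S hS (by omega))
  omega

theorem alive_tup {n : ℕ} {A : ℕ → ℕ → ℤ} (hn : 1 ≤ n) (hA : IsSignMatrix 7 n A)
    (R : Finset ℕ) (hN : IsNeighborly (reorient A R) 7 n 2) :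
    alive 7 (tup A R (n - 1)) = true := by
  obtain ⟨ha, hb, hb', hc, hc'⟩ := ach_tup hA R (n - 1) (by omega)
  rw [alive_iff]
  exact ⟨ha.le hn hN (by norm_num), hb.le hn hN (by norm_num), hb'.le hn hN (by norm_num),
    hc.le hn hN (by norm_num), hc'.le hn hN (by norm_num)⟩

def pairs (A : ℕ → ℕ → ℤ) (R : Finset ℕ) (k : ℕ) : List ((ℕ → Bool) × Bool) :=
  (List.range k).map fun m => (fun s => chg A s m, yy R m)

theorem foldl_pairs (A : ℕ → ℕ → ℤ) (R : Finset ℕ) (k : ℕ) :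
    (pairs A R k).foldl (fun t p => step t p.1 p.2) one = tup A R k := by
  induction k with
  | zero => rfl
  | succ k ih =>
    unfold pairs at ih ⊢
    rw [List.range_succ, List.map_append, List.foldl_append, ih]
    rfl

def cols (A : ℕ → ℕ → ℤ) (k : ℕ) : List (ℕ → Bool) :=
  (List.range k).map fun m => fun s => chg A s m

def wd (R : Finset ℕ) (k : ℕ) : List Bool := (List.range k).map fun m => yy R m

theorem wd_mem {n : ℕ} {A : ℕ → ℕ → ℤ} (hn : 1 ≤ n) (hA : IsSignMatrix 7 n A)
    (R : Finset ℕ) (hN : IsNeighborly (reorient A R) 7 n 2) :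
    wd R (n - 1) ∈ words 7 (cols A (n - 1)) one := by
  have h := mem_words 7 (pairs A R (n - 1)) one (by
    rw [foldl_pairs]; exact alive_tup hn hA R hN)
  have h1 : (pairs A R (n - 1)).map Prod.snd = wd R (n - 1) := by
    simp [pairs, wd]
  have h2 : (pairs A R (n - 1)).map Prod.fst = cols A (n - 1) := by
    simp [pairs, cols]
  rwa [h1, h2] at h

/-! ### Injectivity -/

theorem yy_eq {R R' : Finset ℕ} {k : ℕ} (h : wd R k = wd R' k) :
    ∀ m, m < k → yy R m = yy R' m := by
  intro m hm
  unfold wd at h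
  have := List.map_inj_left.1 h m (by simpa using hm)
  exact this

theorem xor_const {R R' : Finset ℕ} {n : ℕ} (h : ∀ m, m < n - 1 → yy R m = yy R' m) :
    ∀ j, j + 1 ≤ n → xor (decide (j + 1 ∈ R)) (decide (j + 1 ∈ R')) =
      xor (decide (1 ∈ R)) (decide (1 ∈ R')) := by
  intro j
  induction j with
  | zero => intro _; rfl
  | succ j ih =>
    intro hj
    rw [← ih (by omega)]
    have := h j (by omega)
    unfold yy at this
    revert this
    generalize decide (j + 1 ∈ R) = p
    generalize decide (j + 1 ∈ R') = q
    have e : j + 1 + 1 = j + 2 := rfl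
    rw [e]
    generalize decide (j + 2 ∈ R) = u
    generalize decide (j + 2 ∈ R') = v
    revert p q u v
    decide

theorem reorient_rel {A : ℕ → ℕ → ℤ} {R R' : Finset ℕ} {n : ℕ}
    (h : wd R (n - 1) = wd R' (n - 1)) {i c c' : ℕ} (hc : 1 ≤ c) (hcn : c ≤ n) (hc' : 1 ≤ c')
    (hcn' : c' ≤ n) :
    (reorient A R i c' ≠ reorient A R i c) ↔ (reorient A R' i c' ≠ reorient A R' i c) := by
  have h0 := xor_const (yy_eq h)
  have h1 := h0 (c - 1) (by omega)
  have h2 := h0 (c' - 1) (by omega)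
  rw [Nat.sub_add_cancel hc] at h1
  rw [Nat.sub_add_cancel hc'] at h2
  have h3 := h1.trans h2.symm
  unfold reorient
  by_cases a1 : c ∈ R <;> by_cases a2 : c ∈ R' <;> by_cases a3 : c' ∈ R <;>
    by_cases a4 : c' ∈ R' <;> simp [a1, a2, a3, a4] at h3 ⊢ <;> omega

theorem entry_eq {A : ℕ → ℕ → ℤ} {R R' : Finset ℕ} {n : ℕ} (hn : 1 ≤ n)
    (h : wd R (n - 1) = wd R' (n - 1)) (i : ℕ) :
    ttEntry (reorient A R) n i = ttEntry (reorient A R') n i := by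
  cases i with
  | zero => rfl
  | succ i =>
    induction i with
    | zero => rfl
    | succ i ih =>
      simp only [ttEntry]
      rw [← ih]
      cases hc : ttEntry (reorient A R) n (i + 1) with
      | none => rfl
      | some c =>
        obtain ⟨h1, h2, -⟩ := entry_st hn i c hc
        simp only [Option.bind_some]
        unfold rowChange
        apply List.find?_congr
        intro x hx
        have hx' : x ≤ n := by simp at hx; omega
        apply decide_eq_decide.2
        constructor
        · rintro ⟨g1, g2⟩
          exact ⟨g1, (reorient_rel h h1 h2 (by omega) hx').1 g2⟩
        · rintro ⟨g1, g2⟩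
          exact ⟨g1, (reorient_rel h h1 h2 (by omega) hx').2 g2⟩

theorem none_mono {B : ℕ → ℕ → ℤ} {n i : ℕ} (h : ttEntry B n (i + 1) = none) (m : ℕ) :
    ttEntry B n (i + 1 + m) = none := by
  induction m with
  | zero => exact h
  | succ m ih =>
    have e : i + 1 + (m + 1) = (i + m) + 2 := by omega
    have e' : i + 1 + m = i + m + 1 := by omega
    rw [e'] at ih
    rw [e]
    simp [ttEntry, ih]

theorem follows_mem {B : ℕ → ℕ → ℤ} {n : ℕ} {D : Finset ℕ} (h : ttFollows B n D) (c : ℕ) :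
    c ∈ D ↔ ∃ i, 2 ≤ i ∧ ttEntry B n i = some c := by
  rw [h.2 c]
  constructor
  · rintro ⟨i, h1, -, h3⟩; exact ⟨i, h1, h3⟩
  · rintro ⟨i, h1, h3⟩
    refine ⟨i, h1, ?_, h3⟩
    by_contra hlt
    have := none_mono (i := D.card + 1) h.1 (i - (D.card + 2))
    have e : D.card + 1 + 1 + (i - (D.card + 2)) = i := by omega
    rw [e, h3] at this
    cases this

end LawrenceDP

/-- For every `n ≥ 11`, every `7 × n` sign matrix has at most
`1 + (n-1) + C(n-1,2)` 2-neighborly plain travels. -/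
theorem statement_18 (n : ℕ) (hn : 11 ≤ n) (A : ℕ → ℕ → ℤ) (hA : IsSignMatrix 7 n A) :
    {D : Finset ℕ | IsPlainTravel 7 n D ∧ IsNeighborlyTravel A 7 n 2 D}.ncard ≤
      1 + (n - 1) + (n - 1).choose 2 := by
  classical
  have hn1 : 1 ≤ n := by omega
  set X := {D : Finset ℕ | IsPlainTravel 7 n D ∧ IsNeighborlyTravel A 7 n 2 D} with hX
  have hex : ∀ D : Finset ℕ, ∃ R : Finset ℕ, D ∈ X →
      ttFollows (reorient A R) n D ∧ IsNeighborly (reorient A R) 7 n 2 := by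
    intro D
    by_cases hD : D ∈ X
    · obtain ⟨-, R, -, h1, h2⟩ := hD
      exact ⟨R, fun _ => ⟨h1, h2⟩⟩
    · exact ⟨∅, fun h => absurd h hD⟩
  choose R hR using hex
  have hb := LawrenceDP.bound7 (LawrenceDP.cols A (n - 1))
    (by simp [LawrenceDP.cols]; omega)
  have hl : (LawrenceDP.cols A (n - 1)).length = n - 1 := by simp [LawrenceDP.cols]
  rw [hl] at hb
  refine le_trans ?_ hb
  refine le_trans ?_ (LawrenceDP.card_words 7 (LawrenceDP.cols A (n - 1)) LawrenceDP.one)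
  rw [← Set.ncard_coe_finset]
  refine Set.ncard_le_ncard_of_injOn (fun D => LawrenceDP.wd (R D) (n - 1)) ?_ ?_
    (Finset.finite_toSet _)
  · intro D hD
    exact LawrenceDP.wd_mem hn1 hA (R D) (hR D hD).2
  · intro D hD D' hD' heq
    ext c
    rw [LawrenceDP.follows_mem (hR D hD).1, LawrenceDP.follows_mem (hR D' hD').1]
    simp only [LawrenceDP.entry_eq (A := A) hn1 heq]
end
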